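/- arXiv:1902.05686 — 8 statements merged into one kernel-verified Lean document; each statement's English description precedes it below -/
import Mathlib

section
/- Let (M, ρ, μ) be a metric measure space satisfying the doubling condition, the strong homogeneity property with exponent n, and the comparability property with exponent n' ∈ [0, n]. Then for any σ > n + n'/2 there exists a constant C > 0 such that ∫_M D_{t,σ}(x,y) dμ(y) ≤ C uniformly for all t > 0 and x ∈ M. -/
/-!
The comparability property lets `μ(B(y,t))` be replaced by `μ(B(x,t))` at the cost of a factor
`(1 + ρ(x,y)/t)^{n'/2}`, so `D_{t,σ}(x,y) ≤ √C₁ μ(B(x,t))⁻¹ (1 + ρ(x,y)/t)^{-s}` with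
`s = σ - n'/2 > n` (`Dker_le_of_comp`). On the dyadic shell `2^k ≤ 1 + ρ(x,y)/t < 2^{k+1}`, which lies
in `B(x, 2^{k+1} t)`, the last factor is at most `2^{-ks}`, while strong homogeneity bounds the
measure of that ball by `C₀ 2^{(k+1)n} μ(B(x,t))`. Summing over `k` gives a geometric series of ratio
`2^{n-s} < 1`, uniformly in `t` and `x`.

The σ-algebra is not assumed to contain the balls, so the shells are enlarged to the measurable hulls
`toMeasurable μ (ball x (2^{k+1} t))`, which have the same measure as the balls.
-/

open MeasureTheory Metric

/-- The kernel `D_{t,σ}(x,y) := (μ(B(x,t)) μ(B(y,t)))^{-1/2} (1 + ρ(x,y)/t)^{-σ}`. -/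
noncomputable def Dker {M : Type*} [MetricSpace M] [MeasurableSpace M] (μ : Measure M)
    (t σ : ℝ) (x y : M) : ℝ :=
  ((μ (ball x t)).toReal * (μ (ball y t)).toReal) ^ (-(1 / 2 : ℝ)) *
    (1 + dist x y / t) ^ (-σ)

/-- Comparability in the form `V ≤ C₁ u^{n'} W`, with `V`, `W` the measures of the two balls and
`u = 1 + ρ(x,y)/t`, eliminates `W` from the kernel. -/
lemma Dker_le_of_comp {V W u C₁ n' σ : ℝ} (hV : 0 < V) (hu : 0 < u) (hC₁ : 0 < C₁)
    (h : V ≤ C₁ * u ^ n' * W) :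
    (V * W) ^ (-(1 / 2 : ℝ)) * u ^ (-σ) ≤ C₁ ^ (1 / 2 : ℝ) / V * u ^ (-(σ - n' / 2)) := by
  have hun : 0 < u ^ n' := Real.rpow_pos_of_pos hu _
  have h1 : V ^ 2 * (C₁ * u ^ n')⁻¹ ≤ V * W := by
    rw [← div_eq_mul_inv, div_le_iff₀ (by positivity)]
    nlinarith
  have h2 : (V * W) ^ (-(1 / 2 : ℝ)) ≤ (V ^ 2 * (C₁ * u ^ n')⁻¹) ^ (-(1 / 2 : ℝ)) :=
    Real.rpow_le_rpow_of_nonpos (by positivity) h1 (by norm_num)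
  have h3 : (V ^ 2 * (C₁ * u ^ n')⁻¹) ^ (-(1 / 2 : ℝ)) =
      C₁ ^ (1 / 2 : ℝ) / V * u ^ (n' / 2) := by
    rw [Real.mul_rpow (by positivity) (by positivity), Real.rpow_neg (by positivity),
      Real.rpow_neg (by positivity), Real.inv_rpow (by positivity), inv_inv,
      Real.mul_rpow hC₁.le hun.le, ← Real.rpow_mul hu.le, ← Real.sqrt_eq_rpow (V ^ 2),
      Real.sqrt_sq hV.le, mul_one_div]
    ring
  calc _ ≤ (C₁ ^ (1 / 2 : ℝ) / V * u ^ (n' / 2)) * u ^ (-σ) := by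
        rw [← h3]; gcongr
    _ = _ := by
        rw [mul_assoc, ← Real.rpow_add hu]
        congr 2; ring

/-- Under the doubling condition, the strong homogeneity property with exponent
`n`, and the comparability property with exponent `n' ∈ [0,n]`, for any `σ > n + n'/2` there is a
constant `C > 0` such that `∫_M D_{t,σ}(x,y) dμ(y) ≤ C` uniformly for all `t > 0` and `x ∈ M`. -/
theorem integral_Dker_le
    {M : Type*} [MetricSpace M] [MeasurableSpace M] (μ : Measure M)
    (c₀ : ℝ) (hc₀ : 1 < c₀)
    (hdoubling : ∀ (x : M) (r : ℝ), 0 < r →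
      0 < μ (ball x (2 * r)) ∧
      μ (ball x (2 * r)) ≤ ENNReal.ofReal c₀ * μ (ball x r) ∧
      μ (ball x (2 * r)) < ⊤)
    (n : ℝ) (hn : 0 < n) (C₀ : ℝ) (hC₀ : 0 < C₀)
    (hhom : ∀ (x : M) (r lam : ℝ), 0 < r → 1 ≤ lam →
      μ (ball x (lam * r)) ≤ ENNReal.ofReal (C₀ * lam ^ n) * μ (ball x r))
    (n' : ℝ) (hn'0 : 0 ≤ n') (hn'n : n' ≤ n) (C₁ : ℝ) (hC₁ : 0 < C₁)
    (hcomp : ∀ (x y : M) (r : ℝ), 0 < r →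
      μ (ball x r) ≤ ENNReal.ofReal (C₁ * (1 + dist x y / r) ^ n') * μ (ball y r)) :
    ∀ σ : ℝ, n + n' / 2 < σ → ∃ C : ℝ, 0 < C ∧ ∀ (t : ℝ), 0 < t → ∀ x : M,
      ∫⁻ y, ENNReal.ofReal (Dker μ t σ x y) ∂μ ≤ ENNReal.ofReal C := by
  intro σ hσ
  set s : ℝ := σ - n' / 2 with hs
  set A : ℝ := C₁ ^ (1 / 2 : ℝ) with hA
  have hApos : 0 < A := Real.rpow_pos_of_pos hC₁ _
  set p : ℝ := (2 : ℝ) ^ (-s) with hp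
  have hp0 : 0 < p := Real.rpow_pos_of_pos two_pos _
  set b : ℝ := (2 : ℝ) ^ n with hb
  have hb0 : 0 < b := Real.rpow_pos_of_pos two_pos _
  have hq : b * p < 1 := by
    rw [hb, hp, ← Real.rpow_add two_pos]
    exact Real.rpow_lt_one_of_one_lt_of_neg one_lt_two (by linarith)
  have hq0 : 0 < b * p := mul_pos hb0 hp0
  have h1q : 0 < (1 - b * p)⁻¹ := inv_pos.mpr (by linarith)
  refine ⟨A * C₀ * b * (1 - b * p)⁻¹, by positivity, fun t ht x => ?_⟩
  have hfin : ∀ z : M, 0 < μ (ball z t) ∧ μ (ball z t) < ⊤ := fun z => by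
    have h := hdoubling z (t / 2) (by positivity)
    rw [mul_div_cancel₀ t two_ne_zero] at h
    exact ⟨h.1, h.2.2⟩
  set V : ℝ := (μ (ball x t)).toReal with hVdef
  have hV : 0 < V := ENNReal.toReal_pos (hfin x).1.ne' (hfin x).2.ne
  have hVof : μ (ball x t) = ENNReal.ofReal V := (ENNReal.ofReal_toReal (hfin x).2.ne).symm
  let S : ℕ → Set M := fun k => toMeasurable μ (ball x ((2 : ℝ) ^ (k + 1) * t))
  let a : ℕ → ℝ := fun k => A / V * p ^ k
  have hpt : ∀ y, ENNReal.ofReal (Dker μ t σ x y) ≤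
      ∑' k, (S k).indicator (fun _ => ENNReal.ofReal (a k)) y := by
    intro y
    have hu : 1 ≤ 1 + dist x y / t := by
      have : 0 ≤ dist x y / t := by positivity
      linarith
    obtain ⟨k, hk1, hk2⟩ := exists_nat_pow_near hu one_lt_two
    have hmem : y ∈ S k := by
      refine subset_toMeasurable _ _ ?_
      rw [mem_ball, dist_comm, ← div_lt_iff₀ ht]
      linarith
    refine le_trans ?_ (ENNReal.le_tsum k)
    rw [Set.indicator_of_mem hmem]
    apply ENNReal.ofReal_le_ofReal
    have hu0 : 0 < 1 + dist x y / t := by linarith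
    have hc : V ≤ C₁ * (1 + dist x y / t) ^ n' * (μ (ball y t)).toReal := by
      have h := ENNReal.toReal_mono
        (ENNReal.mul_ne_top ENNReal.ofReal_ne_top (hfin y).2.ne) (hcomp x y t ht)
      rwa [ENNReal.toReal_mul, ENNReal.toReal_ofReal (by positivity)] at h
    refine (Dker_le_of_comp hV hu0 hC₁ hc).trans ?_
    refine mul_le_mul_of_nonneg_left ?_ (by positivity)
    calc (1 + dist x y / t) ^ (-(σ - n' / 2)) ≤ ((2 : ℝ) ^ k) ^ (-s) :=
          Real.rpow_le_rpow_of_nonpos (by positivity) hk1 (by linarith)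
      _ = p ^ k := by
          rw [hp, ← Real.rpow_natCast, ← Real.rpow_natCast, ← Real.rpow_mul two_pos.le,
            ← Real.rpow_mul two_pos.le, mul_comm]
  have hterm : ∀ k, ENNReal.ofReal (a k) * μ (S k) ≤
      ENNReal.ofReal (A * C₀ * b * (b * p) ^ k) := by
    intro k
    have hh := hhom x t ((2 : ℝ) ^ (k + 1)) ht (one_le_pow₀ one_le_two)
    have hbk : ((2 : ℝ) ^ (k + 1)) ^ n = b ^ (k + 1) := by
      rw [hb, ← Real.rpow_natCast, ← Real.rpow_natCast, ← Real.rpow_mul two_pos.le,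
        ← Real.rpow_mul two_pos.le, mul_comm]
    rw [hbk, hVof, ← ENNReal.ofReal_mul (by positivity)] at hh
    calc ENNReal.ofReal (a k) * μ (S k)
        ≤ ENNReal.ofReal (a k) * ENNReal.ofReal (C₀ * b ^ (k + 1) * V) := by
          rw [measure_toMeasurable]; gcongr
      _ = _ := by
          rw [← ENNReal.ofReal_mul (by positivity)]
          congr 1
          simp only [a]
          field_simp
          ring
  calc ∫⁻ y, ENNReal.ofReal (Dker μ t σ x y) ∂μ
      ≤ ∫⁻ y, ∑' k, (S k).indicator (fun _ => ENNReal.ofReal (a k)) y ∂μ := lintegral_mono hpt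
    _ = ∑' k, ENNReal.ofReal (a k) * μ (S k) := by
        rw [lintegral_tsum fun k =>
          (measurable_const.indicator (measurableSet_toMeasurable _ _)).aemeasurable]
        exact tsum_congr fun k => lintegral_indicator_const (measurableSet_toMeasurable _ _) _
    _ ≤ ∑' k, ENNReal.ofReal (A * C₀ * b * (b * p) ^ k) := ENNReal.tsum_le_tsum hterm
    _ = ENNReal.ofReal (A * C₀ * b * (1 - b * p)⁻¹) := by
        rw [← ENNReal.ofReal_tsum_of_nonneg (fun k => by positivity)
          ((summable_geometric_of_lt_one hq0.le hq).mul_left _), tsum_mul_left,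
          tsum_geometric_of_lt_one hq0.le hq]
end

section
/- Let (M, ρ, μ) be a metric measure space satisfying the doubling condition, the strong homogeneity property with exponent n, and the comparability property with exponent n' ∈ [0, n]. Suppose σ > n + n'. Then there exists a constant C > 0 such that for all measurable functions f on M, all t > 0 and all x ∈ M, ∫_M |f(y)| / ( μ(B(y,t)) (1 + ρ(x,y)/t)^σ ) dμ(y) ≤ C 𝓜f(x), where 𝓜f(x) := sup_{B ∋ x} μ(B)^{-1} ∫_B |f(y)| dμ(y) is the Hardy–Littlewood maximal function (the supremum ranging over all open balls B containing x). -/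
/-!
Decompose `M` into the dyadic shells `2^k ≤ 1 + ρ(x,y)/t < 2^(k+1)`, `k ∈ ℕ`. On the `k`-th shell,
strong homogeneity followed by comparability gives
`μ(B(x, 2^(k+1) t)) ≤ C₀ C₁ 2^((k+1)n) (1 + ρ(x,y)/t)^n' μ(B(y,t))`, so the kernel is at most
`C₀ C₁ 2^n q^k / μ(B(x, 2^(k+1) t))` with `q = 2^(n+n'-σ) < 1`. As the shell lies in
`B(x, 2^(k+1) t)`, it contributes at most `C₀ C₁ 2^n q^k 𝓜f(x)`, and the geometric series converges.

The σ-algebra on `M` is arbitrary, so balls and shells need not be measurable. The argument only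
uses subadditivity over a cover and domination on a set by a measurable function, both of which
hold on arbitrary sets.
-/

open MeasureTheory Metric ENNReal

/-- The Hardy–Littlewood maximal function on a metric measure space:
`𝓜f(x) = sup_{B ∋ x} μ(B)⁻¹ ∫_B |f| dμ`, the supremum ranging over all open balls
containing `x`. -/
noncomputable def HLmaximal {M : Type*} [MetricSpace M] [MeasurableSpace M] (μ : Measure M)
    (f : M → ℝ) (x : M) : ℝ≥0∞ :=
  ⨆ (z : M) (r : ℝ) (_ : x ∈ ball z r),
    (μ (ball z r))⁻¹ * ∫⁻ y in ball z r, ENNReal.ofReal |f y| ∂μ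

lemma inv_le_mul_inv_of_le_mul {a b c : ℝ≥0∞} (h : b ≤ c * a) (hb0 : b ≠ 0) (hb : b ≠ ⊤) :
    a⁻¹ ≤ c * b⁻¹ := by
  rw [← div_eq_mul_inv, ENNReal.le_div_iff_mul_le (Or.inl hb0) (Or.inl hb), mul_comm,
    ← div_eq_mul_inv]
  exact ENNReal.div_le_of_le_mul h

/-- The numerical estimate on the `k`-th shell, where `u` stands for `1 + ρ(x,y)/t`. -/
lemma shell_weight_le {n n' σ u : ℝ} (hn : 0 < n) (hσ : n + n' < σ) (k : ℕ)
    (hu : (2 : ℝ) ^ k ≤ u) :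
    u ^ (-σ) * (((2 : ℝ) ^ (k + 1)) ^ n * u ^ n') ≤ 2 ^ n * ((2 : ℝ) ^ (n + n' - σ)) ^ k := by
  have h2 : (0 : ℝ) < 2 ^ k := by positivity
  have hu0 : 0 < u := h2.trans_le hu
  have h1 : u ^ (n' - σ) ≤ ((2 : ℝ) ^ k) ^ (n' - σ) :=
    Real.rpow_le_rpow_of_nonpos h2 hu (by linarith)
  calc u ^ (-σ) * (((2 : ℝ) ^ (k + 1)) ^ n * u ^ n')
      = ((2 : ℝ) ^ (k + 1)) ^ n * u ^ (n' - σ) := by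
        rw [show n' - σ = -σ + n' by ring, Real.rpow_add hu0]; ring
    _ ≤ ((2 : ℝ) ^ (k + 1)) ^ n * ((2 : ℝ) ^ k) ^ (n' - σ) := by gcongr
    _ = 2 ^ n * ((2 : ℝ) ^ (n + n' - σ)) ^ k := by
        simp only [← Real.rpow_natCast, ← Real.rpow_mul (zero_le_two : (0 : ℝ) ≤ 2),
          ← Real.rpow_add (zero_lt_two : (0 : ℝ) < 2)]
        congr 1
        push_cast
        ring

/-- Under the doubling condition, the strong homogeneity property with exponent
`n`, and the comparability property with exponent `n' ∈ [0,n]`, if `σ > n + n'` then there is a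
constant `C > 0` such that for all measurable `f`, all `t > 0` and all `x`,
`∫_M |f(y)| / (μ(B(y,t)) (1 + ρ(x,y)/t)^σ) dμ(y) ≤ C 𝓜f(x)`. -/
theorem integral_le_maximal
    {M : Type*} [MetricSpace M] [MeasurableSpace M] (μ : Measure M)
    (c₀ : ℝ) (hc₀ : 1 < c₀)
    (hdoubling : ∀ (x : M) (r : ℝ), 0 < r →
      0 < μ (ball x (2 * r)) ∧
      μ (ball x (2 * r)) ≤ ENNReal.ofReal c₀ * μ (ball x r) ∧
      μ (ball x (2 * r)) < ⊤)
    (n : ℝ) (hn : 0 < n) (C₀ : ℝ) (hC₀ : 0 < C₀)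
    (hhom : ∀ (x : M) (r lam : ℝ), 0 < r → 1 ≤ lam →
      μ (ball x (lam * r)) ≤ ENNReal.ofReal (C₀ * lam ^ n) * μ (ball x r))
    (n' : ℝ) (hn'0 : 0 ≤ n') (hn'n : n' ≤ n) (C₁ : ℝ) (hC₁ : 0 < C₁)
    (hcomp : ∀ (x y : M) (r : ℝ), 0 < r →
      μ (ball x r) ≤ ENNReal.ofReal (C₁ * (1 + dist x y / r) ^ n') * μ (ball y r))
    (σ : ℝ) (hσ : n + n' < σ) :
    ∃ C : ℝ, 0 < C ∧ ∀ f : M → ℝ, Measurable f → ∀ (t : ℝ), 0 < t → ∀ x : M,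
      ∫⁻ y, ENNReal.ofReal (|f y| * (1 + dist x y / t) ^ (-σ)) / μ (ball y t) ∂μ ≤
        ENNReal.ofReal C * HLmaximal μ f x := by
  set q : ℝ := (2 : ℝ) ^ (n + n' - σ) with hq
  have hq0 : 0 < q := by positivity
  have hq1 : q < 1 := Real.rpow_lt_one_of_one_lt_of_neg one_lt_two (by linarith)
  have hsum : Summable fun k : ℕ => C₀ * C₁ * 2 ^ n * q ^ k :=
    (summable_geometric_of_lt_one hq0.le hq1).mul_left _
  have hpos (k : ℕ) : 0 < C₀ * C₁ * 2 ^ n * q ^ k := by positivity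
  refine ⟨∑' k : ℕ, C₀ * C₁ * 2 ^ n * q ^ k, hsum.tsum_pos (fun k => (hpos k).le) 0 (hpos 0), ?_⟩
  intro f hf t ht x
  have hball (r : ℝ) (hr : 0 < r) : μ (ball x r) ≠ 0 ∧ μ (ball x r) ≠ ⊤ := by
    have := hdoubling x (r / 2) (by positivity)
    rw [mul_div_cancel₀ r two_ne_zero] at this
    exact ⟨this.1.ne', this.2.2.ne⟩
  let A : ℕ → Set M := fun k => {y | (2 : ℝ) ^ k ≤ 1 + dist x y / t ∧ 1 + dist x y / t < 2 ^ (k + 1)}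
  have hA : (⋃ k, A k) = Set.univ := by
    refine Set.eq_univ_of_forall fun y => Set.mem_iUnion.2 ?_
    have h1 : 1 ≤ 1 + dist x y / t := by
      have : 0 ≤ dist x y / t := by positivity
      linarith
    exact exists_nat_pow_near h1 one_lt_two
  have hshell (k : ℕ) :
      ∫⁻ y in A k, ENNReal.ofReal (|f y| * (1 + dist x y / t) ^ (-σ)) / μ (ball y t) ∂μ ≤
        ENNReal.ofReal (C₀ * C₁ * 2 ^ n * q ^ k) * HLmaximal μ f x := by
    set R : ℝ := 2 ^ (k + 1) * t with hR
    have hR0 : 0 < R := by positivity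
    obtain ⟨hB0, hBt⟩ := hball R hR0
    have hsub : A k ⊆ ball x R := by
      intro y hy
      have h : dist x y / t < 2 ^ (k + 1) := by linarith [hy.2]
      rw [mem_ball, dist_comm]
      exact (div_lt_iff₀ ht).1 h
    have hpt : ∀ y ∈ A k,
        ENNReal.ofReal (|f y| * (1 + dist x y / t) ^ (-σ)) / μ (ball y t) ≤
          ENNReal.ofReal (C₀ * C₁ * 2 ^ n * q ^ k) * (μ (ball x R))⁻¹ * ENNReal.ofReal |f y| := by
      intro y hy
      have hu := hy.1
      set u : ℝ := 1 + dist x y / t with hu_def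
      have hu0 : 0 < u := lt_of_lt_of_le (by positivity) hu
      have hmeas : μ (ball x R) ≤
          ENNReal.ofReal (C₀ * ((2 : ℝ) ^ (k + 1)) ^ n * (C₁ * u ^ n')) * μ (ball y t) := by
        rw [ENNReal.ofReal_mul (by positivity), mul_assoc]
        exact (hhom x t (2 ^ (k + 1)) ht (one_le_pow₀ one_le_two)).trans
          (mul_le_mul_right (hcomp x y t ht) _)
      have hw := shell_weight_le hn hσ k hu
      calc ENNReal.ofReal (|f y| * u ^ (-σ)) / μ (ball y t)
          = ENNReal.ofReal |f y| * ENNReal.ofReal (u ^ (-σ)) * (μ (ball y t))⁻¹ := by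
            rw [ENNReal.ofReal_mul (abs_nonneg _), div_eq_mul_inv]
        _ ≤ ENNReal.ofReal |f y| * ENNReal.ofReal (u ^ (-σ)) *
            (ENNReal.ofReal (C₀ * ((2 : ℝ) ^ (k + 1)) ^ n * (C₁ * u ^ n')) * (μ (ball x R))⁻¹) := by
            gcongr
            exact inv_le_mul_inv_of_le_mul hmeas hB0 hBt
        _ = ENNReal.ofReal (u ^ (-σ) * (C₀ * ((2 : ℝ) ^ (k + 1)) ^ n * (C₁ * u ^ n'))) *
            (μ (ball x R))⁻¹ * ENNReal.ofReal |f y| := by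
            rw [ENNReal.ofReal_mul (p := u ^ (-σ)) (by positivity)]; ring
        _ ≤ _ := by
            refine mul_le_mul_left (mul_le_mul_left (ENNReal.ofReal_le_ofReal ?_) _) _
            calc u ^ (-σ) * (C₀ * ((2 : ℝ) ^ (k + 1)) ^ n * (C₁ * u ^ n'))
                = C₀ * C₁ * (u ^ (-σ) * (((2 : ℝ) ^ (k + 1)) ^ n * u ^ n')) := by ring
              _ ≤ C₀ * C₁ * (2 ^ n * q ^ k) := by gcongr
              _ = C₀ * C₁ * 2 ^ n * q ^ k := by ring
    have hfm : Measurable fun y => ENNReal.ofReal |f y| := by fun_prop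
    calc _ ≤ ∫⁻ y in A k, ENNReal.ofReal (C₀ * C₁ * 2 ^ n * q ^ k) * (μ (ball x R))⁻¹ *
              ENNReal.ofReal |f y| ∂μ := setLIntegral_mono (hfm.const_mul _) hpt
      _ ≤ ∫⁻ y in ball x R, ENNReal.ofReal (C₀ * C₁ * 2 ^ n * q ^ k) * (μ (ball x R))⁻¹ *
              ENNReal.ofReal |f y| ∂μ := lintegral_mono_set hsub
      _ = ENNReal.ofReal (C₀ * C₁ * 2 ^ n * q ^ k) *
            ((μ (ball x R))⁻¹ * ∫⁻ y in ball x R, ENNReal.ofReal |f y| ∂μ) := by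
          rw [lintegral_const_mul _ hfm, mul_assoc]
      _ ≤ _ := by
          gcongr
          exact le_iSup₂_of_le x R (le_iSup_of_le (mem_ball_self hR0) le_rfl)
  calc ∫⁻ y, ENNReal.ofReal (|f y| * (1 + dist x y / t) ^ (-σ)) / μ (ball y t) ∂μ
      = ∫⁻ y in ⋃ k, A k,
          ENNReal.ofReal (|f y| * (1 + dist x y / t) ^ (-σ)) / μ (ball y t) ∂μ := by
        rw [hA, Measure.restrict_univ]
    _ ≤ ∑' k, ∫⁻ y in A k,
          ENNReal.ofReal (|f y| * (1 + dist x y / t) ^ (-σ)) / μ (ball y t) ∂μ :=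
        lintegral_iUnion_le _ _
    _ ≤ ∑' k, ENNReal.ofReal (C₀ * C₁ * 2 ^ n * q ^ k) * HLmaximal μ f x :=
        ENNReal.tsum_le_tsum hshell
    _ = _ := by
        rw [ENNReal.tsum_mul_right, ENNReal.ofReal_tsum_of_nonneg (fun k => (hpos k).le) hsum]
end

section
/- Let (M, ρ, μ) be a metric measure space satisfying the doubling condition, the strong homogeneity property with exponent n, and the comparability property with exponent n' ∈ [0, n]. For any σ > n + n' there exists a constant c > 0 such that for all t, s > 0 and all x, y ∈ M, ∫_M D_{t,σ}(x,z) D_{s,σ}(z,y) dμ(z) ≤ c D_{t∨s, σ−n−n'}(x,y), where t∨s := max{t,s}. -/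
/-!
By symmetry of the kernel one may assume `s ≤ t`. Write `V(x,r) = μ(B(x,r))`, `d = ρ(x,y)` and
`δ = σ - n - n'`. Comparability moves the two volume factors centred at `z` to `y`, at the price of
`C₁ (1 + ρ(z,y)/s)^{n'}` (`Dker_mul_Dker_le`), which leaves
`V(y,s)⁻¹ (1 + ρ(x,z)/t)^{-σ} (1 + ρ(z,y)/s)^{-(σ-n')}` to be integrated. If `d ≤ t` or
`d ≤ 2 ρ(x,z)`, the first factor is at most `2^σ (1 + d/t)^{-δ}`, and the second is integrable with
integral `≲ V(y,s)` since `σ - n' > n`. Otherwise `d > t` and `d ≤ 2 ρ(z,y)`; then the second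
factor is at most a constant times `(1 + d/t)^{-δ} (t/s)^{-n} (1 + d/t)^{-n}`, and the first one
integrates to `≲ V(x,t) ≲ (1 + d/t)^{n'} (t/s)^n V(y,s)`; one concludes with `n' ≤ n`. The
pointwise form of this case distinction is `kernel_split`.

The σ-algebra is not assumed to contain the balls, so integrands need not be measurable and the
lower integral need not be subadditive on them. Therefore `exists_measurable_majorant` bounds
`(1 + ρ(z,y)/s)^{-τ}`, for `τ > n`, by a measurable function with the right integral: a dyadic sum
of indicators of measurable hulls of balls.
-/

open MeasureTheory Metric

/-- The dyadic majorant of `(1 + ρ(z,y)/s)^{-τ}`; it is built from measurable hulls of balls, so no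
measurability of the balls is needed. -/
lemma exists_measurable_majorant {M : Type*} [MetricSpace M] [MeasurableSpace M] (μ : Measure M)
    (n C₀ : ℝ) (hC₀ : 0 < C₀)
    (hhom : ∀ (x : M) (r lam : ℝ), 0 < r → 1 ≤ lam →
      μ (ball x (lam * r)) ≤ ENNReal.ofReal (C₀ * lam ^ n) * μ (ball x r))
    (τ : ℝ) (hτ0 : 0 < τ) (hτ : n < τ) :
    ∃ A : ℝ, 0 < A ∧ ∀ (y : M) (s : ℝ), 0 < s → ∃ g : M → ENNReal, Measurable g ∧
      (∀ z, ENNReal.ofReal ((1 + dist z y / s) ^ (-τ)) ≤ g z) ∧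
      ∫⁻ z, g z ∂μ ≤ ENNReal.ofReal A * μ (ball y s) := by
  have hq1 : (2 : ℝ) ^ (n - τ) < 1 := Real.rpow_lt_one_of_one_lt_of_neg (by norm_num) (by linarith)
  have hq0 : (0 : ℝ) < 2 ^ (n - τ) := by positivity
  have h2τ : (0 : ℝ) < 2 ^ τ := by positivity
  refine ⟨2 ^ τ * C₀ * (1 - 2 ^ (n - τ))⁻¹, by
    have : 0 < 1 - (2 : ℝ) ^ (n - τ) := by linarith
    positivity, fun y s hs => ?_⟩
  let a : ℕ → ℝ := fun k => 2 ^ τ * ((2 : ℝ) ^ (-τ)) ^ k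
  let S : ℕ → Set M := fun k => toMeasurable μ (ball y (2 ^ k * s))
  have hS : ∀ k, MeasurableSet (S k) := fun k => measurableSet_toMeasurable _ _
  refine ⟨fun z => ∑' k, (S k).indicator (fun _ => ENNReal.ofReal (a k)) z, ?_, ?_, ?_⟩
  · exact Measurable.tsum fun k => measurable_const.indicator (hS k)
  · intro z
    have hex : ∃ k : ℕ, dist z y < 2 ^ k * s := by
      obtain ⟨k, hk⟩ := pow_unbounded_of_one_lt (dist z y / s) (one_lt_two (α := ℝ))
      exact ⟨k, (div_lt_iff₀ hs).1 hk⟩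
    classical
    have hk := Nat.find_spec hex
    have hmin := fun m => Nat.find_min (H := hex) (m := m)
    generalize Nat.find hex = k at hk hmin
    refine le_trans ?_ (ENNReal.le_tsum k)
    rw [Set.indicator_of_mem (subset_toMeasurable μ _ (mem_ball.2 hk))]
    apply ENNReal.ofReal_le_ofReal
    have hd : 0 ≤ dist z y / s := by positivity
    -- Minimality of `k` gives `2 ^ k ≤ 2 * (1 + dist z y / s)`.
    have hkey : (2 : ℝ) ^ k / 2 ≤ 1 + dist z y / s := by
      cases k with
      | zero => norm_num; linarith
      | succ m =>
        have h1 := not_lt.1 (hmin m (Nat.lt_succ_self m))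
        have h2 := (le_div_iff₀ hs).2 h1
        rw [pow_succ]; linarith
    calc (1 + dist z y / s) ^ (-τ) ≤ ((2 : ℝ) ^ k / 2) ^ (-τ) :=
          Real.rpow_le_rpow_of_nonpos (by positivity) hkey (by linarith)
      _ = a k := by
          simp only [a]
          rw [Real.div_rpow (by positivity) (by norm_num), Real.rpow_neg (by norm_num : (0:ℝ) ≤ 2) τ,
            div_inv_eq_mul, mul_comm, ← Real.rpow_natCast, ← Real.rpow_natCast,
            ← Real.rpow_neg (by norm_num), ← Real.rpow_mul (by norm_num),
            ← Real.rpow_mul (by norm_num), mul_comm (k : ℝ)]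
  · rw [lintegral_tsum fun k => (measurable_const.indicator (hS k)).aemeasurable]
    have hterm : ∀ k, ∫⁻ z, (S k).indicator (fun _ => ENNReal.ofReal (a k)) z ∂μ ≤
        ENNReal.ofReal (2 ^ τ * C₀ * (2 ^ (n - τ)) ^ k) * μ (ball y s) := by
      intro k
      rw [lintegral_indicator_const (hS k), measure_toMeasurable]
      have hak : 0 ≤ a k := by positivity
      calc _ ≤ ENNReal.ofReal (a k) *
            (ENNReal.ofReal (C₀ * ((2 : ℝ) ^ k) ^ n) * μ (ball y s)) := by
            gcongr; exact hhom y s _ hs (one_le_pow₀ (by norm_num))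
        _ = _ := by
            rw [← mul_assoc, ← ENNReal.ofReal_mul hak]
            congr 2
            have h3 : ((2 : ℝ) ^ k) ^ n = ((2 : ℝ) ^ n) ^ k := by
              rw [← Real.rpow_natCast, ← Real.rpow_natCast, ← Real.rpow_mul (by norm_num),
                ← Real.rpow_mul (by norm_num), mul_comm]
            simp only [a]
            rw [h3, sub_eq_add_neg, Real.rpow_add (by norm_num), mul_pow]
            ring
    refine (ENNReal.tsum_le_tsum hterm).trans ?_
    rw [ENNReal.tsum_mul_right, ← ENNReal.ofReal_tsum_of_nonneg (fun k => by positivity)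
      ((summable_geometric_of_lt_one hq0.le hq1).mul_left _), tsum_mul_left,
      tsum_geometric_of_lt_one hq0.le hq1]

lemma rpow_neg_half_le {v w K : ℝ} (hv : 0 < v) (hw : 0 < w) (hK : 0 < K) (h : w ≤ K * v) :
    v ^ (-(1 / 2 : ℝ)) ≤ K ^ (1 / 2 : ℝ) * w ^ (-(1 / 2 : ℝ)) := by
  calc v ^ (-(1 / 2 : ℝ)) = K ^ (1 / 2 : ℝ) * (K * v) ^ (-(1 / 2 : ℝ)) := by
        rw [Real.mul_rpow hK.le hv.le, ← mul_assoc, ← Real.rpow_add hK]; simp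
    _ ≤ _ := by
        gcongr ?_ * ?_
        exact Real.rpow_le_rpow_of_nonpos hw h (by norm_num)

lemma Dker_comm {M : Type*} [MetricSpace M] [MeasurableSpace M] (μ : Measure M)
    (t σ : ℝ) (x y : M) : Dker μ t σ x y = Dker μ t σ y x := by
  unfold Dker
  rw [dist_comm, mul_comm (μ (ball x t)).toReal]

/-- Here `a = ρ(x,z)`, `b = ρ(z,y)`, `d = ρ(x,y)`: the product of the two decay factors splits into
a term in which only the `b`-decay is left and a term in which only the `a`-decay is left, the
latter with the small coefficient that compensates for `V(x,t) / V(y,s)`. -/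
lemma kernel_split {n n' σ : ℝ} (hn : 0 < n) (hn'0 : 0 ≤ n') (hσ : n + n' < σ)
    {t s a b d : ℝ} (hs : 0 < s) (hst : s ≤ t) (ha : 0 ≤ a) (hb : 0 ≤ b) (hd : 0 ≤ d)
    (htri : d ≤ a + b) :
    (1 + a / t) ^ (-σ) * (1 + b / s) ^ (-(σ - n')) ≤
      2 ^ σ * (1 + d / t) ^ (-(σ - n - n')) *
        ((1 + b / s) ^ (-(σ - n')) +
          2 ^ n * (t / s) ^ (-n) * (1 + d / t) ^ (-n) * (1 + a / t) ^ (-σ)) := by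
  have ht : 0 < t := hs.trans_le hst
  have hat : 0 ≤ a / t := by positivity
  have hbs : 0 ≤ b / s := by positivity
  have hdt : 0 ≤ d / t := by positivity
  have hds : d / t ≤ d / s := by gcongr
  set Q := 2 ^ n * (t / s) ^ (-n) * (1 + d / t) ^ (-n) with hQ
  have hQ0 : 0 ≤ Q := by positivity
  set α := (1 + a / t) ^ (-σ) with hα
  set β := (1 + b / s) ^ (-(σ - n')) with hβ
  have hα0 : 0 ≤ α := by positivity
  have hβ0 : 0 ≤ β := by positivity
  set R := 2 ^ σ * (1 + d / t) ^ (-(σ - n - n')) with hR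
  have hR0 : 0 ≤ R := by positivity
  have half : ∀ (u : ℝ) (p : ℝ), 0 ≤ u → (u / 2) ^ (-p) = 2 ^ p * u ^ (-p) := by
    intro u p hu
    rw [Real.div_rpow hu (by norm_num), Real.rpow_neg (by norm_num : (0:ℝ) ≤ 2), div_inv_eq_mul,
      mul_comm]
  by_cases hcase : d ≤ t ∨ d ≤ 2 * a
  · have h1 : (1 + d / t) / 2 ≤ 1 + a / t := by
      rcases hcase with h | h
      · have : d / t ≤ 1 := (div_le_one ht).2 h
        linarith
      · have : d / t ≤ 2 * a / t := by gcongr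
        have e : 2 * a / t = 2 * (a / t) := by ring
        linarith
    have h2 : α ≤ R := by
      calc α ≤ ((1 + d / t) / 2) ^ (-σ) :=
            Real.rpow_le_rpow_of_nonpos (by positivity) h1 (by linarith)
        _ = 2 ^ σ * (1 + d / t) ^ (-σ) := half _ _ (by positivity)
        _ ≤ R := by
            rw [hR]
            gcongr 2 ^ σ * ?_
            exact Real.rpow_le_rpow_of_exponent_le (by linarith) (by linarith)
    calc α * β ≤ R * β := by gcongr
      _ ≤ R * (β + Q * α) := by
          gcongr
          have := mul_nonneg hQ0 hα0
          linarith
  · push Not at hcase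
    obtain ⟨hdt1, hda⟩ := hcase
    have hdb : d / s ≤ 2 * (b / s) := by
      rw [← mul_div_assoc]; gcongr; linarith
    have hds0 : 0 ≤ d / s := by positivity
    have h1 : (1 + d / s) / 2 ≤ 1 + b / s := by linarith
    have h1dt : 1 ≤ d / t := (one_le_div ht).2 hdt1.le
    -- `1 + d/s ≥ (t/s) (d/t)`, and `d/t ≥ (1 + d/t)/2` because `d > t`.
    have h3 : (t / s) * ((1 + d / t) / 2) ≤ 1 + d / s := by
      have e : d / s = (t / s) * (d / t) := by field_simp
      have : (t / s) * ((1 + d / t) / 2) ≤ (t / s) * (d / t) := by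
        gcongr ?_ * ?_
        linarith
      linarith
    have h4 : (1 + d / s) ^ (-n) ≤ Q := by
      calc (1 + d / s) ^ (-n) ≤ ((t / s) * ((1 + d / t) / 2)) ^ (-n) :=
            Real.rpow_le_rpow_of_nonpos (by positivity) h3 (by linarith)
        _ = Q := by
            rw [Real.mul_rpow (by positivity) (by positivity), half _ _ (by positivity), hQ]
            ring
    have h5 : (1 + d / s) ^ (-(σ - n - n')) ≤ (1 + d / t) ^ (-(σ - n - n')) :=
      Real.rpow_le_rpow_of_nonpos (by positivity) (by linarith) (by linarith)
    have h2 : β ≤ R * Q := by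
      calc β ≤ ((1 + d / s) / 2) ^ (-(σ - n')) :=
            Real.rpow_le_rpow_of_nonpos (by positivity) h1 (by linarith)
        _ = 2 ^ (σ - n') * ((1 + d / s) ^ (-(σ - n - n')) * (1 + d / s) ^ (-n)) := by
            rw [half _ _ (by positivity), ← Real.rpow_add (by positivity)]
            congr 2; ring
        _ ≤ 2 ^ σ * ((1 + d / t) ^ (-(σ - n - n')) * Q) := by
            gcongr
            · norm_num
            · linarith
        _ = R * Q := by rw [hR]; ring
    calc α * β ≤ α * (R * Q) := by gcongr
      _ = R * (Q * α) := by ring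
      _ ≤ R * (β + Q * α) := by
          gcongr
          linarith

/-- Comparability moves the volume factors centred at `z` to `y`. -/
lemma Dker_mul_Dker_le {M : Type*} [MetricSpace M] [MeasurableSpace M] (μ : Measure M)
    (hV : ∀ (x : M) (r : ℝ), 0 < r → 0 < (μ (ball x r)).toReal)
    (n' : ℝ) (hn'0 : 0 ≤ n') (C₁ : ℝ) (hC₁ : 0 < C₁)
    (hcomp : ∀ (x y : M) (r : ℝ), 0 < r →
      (μ (ball x r)).toReal ≤ C₁ * (1 + dist x y / r) ^ n' * (μ (ball y r)).toReal)
    (σ t s : ℝ) (hs : 0 < s) (hst : s ≤ t) (x y z : M) :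
    Dker μ t σ x z * Dker μ s σ z y ≤
      ((μ (ball x t)).toReal * (μ (ball y t)).toReal) ^ (-(1 / 2 : ℝ)) * C₁ *
        ((μ (ball y s)).toReal)⁻¹ *
        ((1 + dist x z / t) ^ (-σ) * (1 + dist z y / s) ^ (-(σ - n'))) := by
  have ht : 0 < t := hs.trans_le hst
  have hxt := hV x t ht
  have hyt := hV y t ht
  have hys := hV y s hs
  have hzt := hV z t ht
  have hzs := hV z s hs
  unfold Dker
  have hct := hcomp y z t ht
  have hcs := hcomp y z s hs
  rw [dist_comm y z] at hct hcs
  generalize (μ (ball x t)).toReal = vxt at *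
  generalize (μ (ball y t)).toReal = vyt at *
  generalize (μ (ball y s)).toReal = vys at *
  generalize (μ (ball z t)).toReal = vzt at *
  generalize (μ (ball z s)).toReal = vzs at *
  have hb : 0 ≤ dist z y := dist_nonneg
  have ha : 0 ≤ dist x z := dist_nonneg
  generalize dist z y = b at *
  generalize dist x z = a at *
  set K := C₁ * (1 + b / s) ^ n' with hK
  have hK0 : 0 < K := by positivity
  have hct' : vyt ≤ K * vzt := by
    refine hct.trans ?_
    rw [hK]
    gcongr
  have e1 := rpow_neg_half_le hzt hyt hK0 hct'
  have e2 := rpow_neg_half_le hzs hys hK0 hcs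
  have eK : K ^ (1 / 2 : ℝ) * K ^ (1 / 2 : ℝ) = K := by
    rw [← Real.rpow_add hK0]; norm_num
  have ey : vys ^ (-(1 / 2 : ℝ)) * vys ^ (-(1 / 2 : ℝ)) = vys⁻¹ := by
    rw [← Real.rpow_add hys, ← Real.rpow_neg_one]; norm_num
  have eb : (1 + b / s) ^ n' * (1 + b / s) ^ (-σ) = (1 + b / s) ^ (-(σ - n')) := by
    rw [← Real.rpow_add (by positivity)]; congr 1; ring
  rw [Real.mul_rpow hxt.le hzt.le, Real.mul_rpow hzs.le hys.le, Real.mul_rpow hxt.le hyt.le]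
  calc _ ≤ vxt ^ (-(1 / 2 : ℝ)) * (K ^ (1 / 2 : ℝ) * vyt ^ (-(1 / 2 : ℝ))) * (1 + a / t) ^ (-σ) *
        ((K ^ (1 / 2 : ℝ) * vys ^ (-(1 / 2 : ℝ))) * vys ^ (-(1 / 2 : ℝ)) * (1 + b / s) ^ (-σ)) := by
        gcongr
    _ = vxt ^ (-(1 / 2 : ℝ)) * vyt ^ (-(1 / 2 : ℝ)) * (K ^ (1 / 2 : ℝ) * K ^ (1 / 2 : ℝ)) *
        (vys ^ (-(1 / 2 : ℝ)) * vys ^ (-(1 / 2 : ℝ))) *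
        ((1 + a / t) ^ (-σ) * (1 + b / s) ^ (-σ)) := by ring
    _ = _ := by
        rw [eK, ey, hK, ← eb]; ring

/-- Under the doubling condition, the strong homogeneity property with exponent
`n`, and the comparability property with exponent `n' ∈ [0,n]`, for any `σ > n + n'` there exists
`c > 0` such that for all `t, s > 0` and all `x, y ∈ M`,
`∫_M D_{t,σ}(x,z) D_{s,σ}(z,y) dμ(z) ≤ c D_{max(t,s), σ-n-n'}(x,y)`. -/
theorem integral_Dker_mul_Dker_le
    {M : Type*} [MetricSpace M] [MeasurableSpace M] (μ : Measure M)
    (c₀ : ℝ) (hc₀ : 1 < c₀)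
    (hdoubling : ∀ (x : M) (r : ℝ), 0 < r →
      0 < μ (ball x (2 * r)) ∧
      μ (ball x (2 * r)) ≤ ENNReal.ofReal c₀ * μ (ball x r) ∧
      μ (ball x (2 * r)) < ⊤)
    (n : ℝ) (hn : 0 < n) (C₀ : ℝ) (hC₀ : 0 < C₀)
    (hhom : ∀ (x : M) (r lam : ℝ), 0 < r → 1 ≤ lam →
      μ (ball x (lam * r)) ≤ ENNReal.ofReal (C₀ * lam ^ n) * μ (ball x r))
    (n' : ℝ) (hn'0 : 0 ≤ n') (hn'n : n' ≤ n) (C₁ : ℝ) (hC₁ : 0 < C₁)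
    (hcomp : ∀ (x y : M) (r : ℝ), 0 < r →
      μ (ball x r) ≤ ENNReal.ofReal (C₁ * (1 + dist x y / r) ^ n') * μ (ball y r)) :
    ∀ σ : ℝ, n + n' < σ → ∃ c : ℝ, 0 < c ∧
      ∀ (t s : ℝ), 0 < t → 0 < s → ∀ x y : M,
        ∫⁻ z, ENNReal.ofReal (Dker μ t σ x z * Dker μ s σ z y) ∂μ ≤
          ENNReal.ofReal (c * Dker μ (max t s) (σ - n - n') x y) := by
  intro σ hσ
  have hfin : ∀ (x : M) (r : ℝ), 0 < r → μ (ball x r) ≠ ⊤ := by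
    intro x r hr
    have h := (hdoubling x (r / 2) (by positivity)).2.2
    rw [mul_div_cancel₀ r two_ne_zero] at h
    exact h.ne
  have hV : ∀ (x : M) (r : ℝ), 0 < r → 0 < (μ (ball x r)).toReal := by
    intro x r hr
    have h := (hdoubling x (r / 2) (by positivity)).1
    rw [mul_div_cancel₀ r two_ne_zero] at h
    exact ENNReal.toReal_pos h.ne' (hfin x r hr)
  have hcompR : ∀ (x y : M) (r : ℝ), 0 < r →
      (μ (ball x r)).toReal ≤ C₁ * (1 + dist x y / r) ^ n' * (μ (ball y r)).toReal := by
    intro x y r hr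
    have h := ENNReal.toReal_mono (ENNReal.mul_ne_top ENNReal.ofReal_ne_top (hfin y r hr))
      (hcomp x y r hr)
    rwa [ENNReal.toReal_mul, ENNReal.toReal_ofReal (by positivity)] at h
  have hhomR : ∀ (x : M) (r lam : ℝ), 0 < r → 1 ≤ lam →
      (μ (ball x (lam * r))).toReal ≤ C₀ * lam ^ n * (μ (ball x r)).toReal := by
    intro x r lam hr hl
    have h := ENNReal.toReal_mono (ENNReal.mul_ne_top ENNReal.ofReal_ne_top (hfin x r hr))
      (hhom x r lam hr hl)
    rwa [ENNReal.toReal_mul, ENNReal.toReal_ofReal (by positivity)] at h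
  obtain ⟨A₁, hA₁, hmaj₁⟩ := exists_measurable_majorant μ n C₀ hC₀ hhom (σ - n')
    (by linarith) (by linarith)
  obtain ⟨A₂, hA₂, hmaj₂⟩ := exists_measurable_majorant μ n C₀ hC₀ hhom σ
    (by linarith) (by linarith)
  set c : ℝ := C₁ * 2 ^ σ * (A₁ + 2 ^ n * C₀ * C₁ * A₂) with hc
  have hc0 : 0 < c := by positivity
  have main : ∀ (t s : ℝ), 0 < s → s ≤ t → ∀ x y : M,
      ∫⁻ z, ENNReal.ofReal (Dker μ t σ x z * Dker μ s σ z y) ∂μ ≤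
        ENNReal.ofReal (c * Dker μ t (σ - n - n') x y) := by
    intro t s hs hst x y
    have ht : 0 < t := hs.trans_le hst
    obtain ⟨g₁, hg₁m, hg₁, hg₁i⟩ := hmaj₁ y s hs
    obtain ⟨g₂, hg₂m, hg₂, hg₂i⟩ := hmaj₂ x t ht
    set E := ((μ (ball x t)).toReal * (μ (ball y t)).toReal) ^ (-(1 / 2 : ℝ)) with hE
    have hE0 : 0 ≤ E := by positivity
    have hys := hV y s hs
    set Q := 2 ^ n * (t / s) ^ (-n) * (1 + dist x y / t) ^ (-n) with hQ
    have hQ0 : 0 ≤ Q := by positivity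
    set W := (1 + dist x y / t) ^ (-(σ - n - n')) with hW
    have hW0 : 0 ≤ W := by positivity
    set L := E * C₁ * ((μ (ball y s)).toReal)⁻¹ * (2 ^ σ * W) with hL
    have hL0 : 0 ≤ L := by positivity
    have hpt : ∀ z, ENNReal.ofReal (Dker μ t σ x z * Dker μ s σ z y) ≤
        ENNReal.ofReal L * (g₁ z + ENNReal.ofReal Q * g₂ z) := by
      intro z
      have h1 := Dker_mul_Dker_le μ hV n' hn'0 C₁ hC₁ hcompR σ t s hs hst x y z
      have h2 := kernel_split hn hn'0 hσ hs hst (a := dist x z) (b := dist z y) (d := dist x y)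
        dist_nonneg dist_nonneg dist_nonneg (dist_triangle x z y)
      have h3 : Dker μ t σ x z * Dker μ s σ z y ≤
          L * ((1 + dist z y / s) ^ (-(σ - n')) + Q * (1 + dist x z / t) ^ (-σ)) := by
        refine h1.trans ?_
        rw [hL, mul_assoc _ (2 ^ σ * W)]
        gcongr
      refine (ENNReal.ofReal_le_ofReal h3).trans ?_
      rw [ENNReal.ofReal_mul hL0, ENNReal.ofReal_add (by positivity) (by positivity),
        ENNReal.ofReal_mul hQ0]
      have h4 := hg₂ z
      rw [dist_comm] at h4
      gcongr
      exact hg₁ z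
    refine (lintegral_mono hpt).trans ?_
    rw [lintegral_const_mul' _ _ ENNReal.ofReal_ne_top, lintegral_add_left hg₁m,
      lintegral_const_mul _ hg₂m]
    have hm : ∀ (x : M) (r : ℝ), 0 < r → μ (ball x r) = ENNReal.ofReal (μ (ball x r)).toReal :=
      fun x r hr => (ENNReal.ofReal_toReal (hfin x r hr)).symm
    rw [hm y s hs, ← ENNReal.ofReal_mul hA₁.le] at hg₁i
    rw [hm x t ht, ← ENNReal.ofReal_mul hA₂.le] at hg₂i
    calc _ ≤ ENNReal.ofReal L * (ENNReal.ofReal (A₁ * (μ (ball y s)).toReal) +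
          ENNReal.ofReal Q * ENNReal.ofReal (A₂ * (μ (ball x t)).toReal)) := by gcongr
      _ = ENNReal.ofReal (L * (A₁ * (μ (ball y s)).toReal +
          Q * (A₂ * (μ (ball x t)).toReal))) := by
          rw [← ENNReal.ofReal_mul hQ0, ← ENNReal.ofReal_add (by positivity) (by positivity),
            ← ENNReal.ofReal_mul hL0]
      _ ≤ _ := by
          apply ENNReal.ofReal_le_ofReal
          have hQV : Q * (μ (ball x t)).toReal ≤ 2 ^ n * C₀ * C₁ * (μ (ball y s)).toReal := by
            have k1 := hcompR x y t ht
            have k2 := hhomR y s (t / s) hs ((one_le_div hs).2 hst)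
            rw [div_mul_cancel₀ t hs.ne'] at k2
            have hts : 0 < t / s := by positivity
            have hdt : 0 < 1 + dist x y / t := by positivity
            have hdt1 : 1 ≤ 1 + dist x y / t := by
              have : 0 ≤ dist x y / t := by positivity
              linarith
            have k3 : (t / s) ^ (-n) * (t / s) ^ n = 1 := by
              rw [← Real.rpow_add hts]; simp
            have k4 : (1 + dist x y / t) ^ (-n) * (1 + dist x y / t) ^ n' ≤ 1 := by
              rw [← Real.rpow_add hdt]
              exact Real.rpow_le_one_of_one_le_of_nonpos hdt1 (by linarith)
            calc Q * (μ (ball x t)).toReal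
                ≤ Q * (C₁ * (1 + dist x y / t) ^ n' *
                  (C₀ * (t / s) ^ n * (μ (ball y s)).toReal)) := by
                  gcongr
                  refine k1.trans ?_
                  gcongr
              _ = 2 ^ n * C₀ * C₁ * (μ (ball y s)).toReal * ((t / s) ^ (-n) * (t / s) ^ n) *
                  ((1 + dist x y / t) ^ (-n) * (1 + dist x y / t) ^ n') := by rw [hQ]; ring
              _ ≤ 2 ^ n * C₀ * C₁ * (μ (ball y s)).toReal * 1 * 1 := by
                  rw [k3]; gcongr
              _ = _ := by ring
          calc _ = L * (A₁ * (μ (ball y s)).toReal + A₂ * (Q * (μ (ball x t)).toReal)) := by ring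
            _ ≤ L * (A₁ * (μ (ball y s)).toReal +
                A₂ * (2 ^ n * C₀ * C₁ * (μ (ball y s)).toReal)) := by gcongr
            _ = c * (E * W) := by
                rw [hL, hc]; field_simp
            _ = _ := rfl
  refine ⟨c, hc0, fun t s ht hs x y => ?_⟩
  rcases le_total s t with h | h
  · rw [max_eq_left h]
    exact main t s hs h x y
  · rw [max_eq_right h, Dker_comm μ s (σ - n - n')]
    refine le_trans (le_of_eq ?_) (main s t ht h y x)
    refine lintegral_congr fun z => ?_
    rw [mul_comm, Dker_comm μ s σ z y, Dker_comm μ t σ x z]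
end

section
/- Let (M, ρ, μ) be a metric measure space satisfying the doubling condition and the comparability property with exponent n' ∈ [0, ∞). Then for every σ > n'/2 there is a constant C > 0 such that for all t > 0 and all x, y, z ∈ M with ρ(y,z) < ρ(x,y)/2, one has D_{t,σ}(x,z) ≤ C D_{t, σ−n'/2}(x,y). -/
/-!
Write `u = 1 + ρ(x,y)/t`. Since `ρ(y,z) < ρ(x,y)/2`, the triangle inequality gives
`1 + ρ(x,z)/t ≥ u/2`, so the decay factor of `D_{t,σ}(x,z)` is at most `2^σ u^{-σ}`.
Comparability at `y, z` together with `1 + ρ(y,z)/t ≤ u` gives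
`μ(B(y,t)) ≤ C₁ u^{n'} μ(B(z,t))`, so replacing `μ(B(z,t))` by `μ(B(y,t))` in the volume factor
costs at most `C₁^{1/2} u^{n'/2}`. The claim holds with `C = C₁^{1/2} 2^σ`.
-/

open MeasureTheory Metric

/-- Under the doubling condition and the comparability property with exponent
`n' ≥ 0`, for every `σ > n'/2` there is `C > 0` such that for all `t > 0` and all `x, y, z`
with `ρ(y,z) < ρ(x,y)/2`, one has `D_{t,σ}(x,z) ≤ C D_{t, σ - n'/2}(x,y)`. -/
theorem Dker_le_of_dist_lt
    {M : Type*} [MetricSpace M] [MeasurableSpace M] (μ : Measure M)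
    (c₀ : ℝ) (hc₀ : 1 < c₀)
    (hdoubling : ∀ (x : M) (r : ℝ), 0 < r →
      0 < μ (ball x (2 * r)) ∧
      μ (ball x (2 * r)) ≤ ENNReal.ofReal c₀ * μ (ball x r) ∧
      μ (ball x (2 * r)) < ⊤)
    (n' : ℝ) (hn'0 : 0 ≤ n') (C₁ : ℝ) (hC₁ : 0 < C₁)
    (hcomp : ∀ (x y : M) (r : ℝ), 0 < r →
      μ (ball x r) ≤ ENNReal.ofReal (C₁ * (1 + dist x y / r) ^ n') * μ (ball y r)) :
    ∀ σ : ℝ, n' / 2 < σ → ∃ C : ℝ, 0 < C ∧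
      ∀ (t : ℝ), 0 < t → ∀ x y z : M, dist y z < dist x y / 2 →
        Dker μ t σ x z ≤ C * Dker μ t (σ - n' / 2) x y := by
  intro σ hσ
  have hσ0 : 0 < σ := by linarith
  refine ⟨C₁ ^ (1 / 2 : ℝ) * 2 ^ σ, by positivity, ?_⟩
  intro t ht x y z hyz
  -- The doubling hypothesis at radius `t / 2` makes every ball of radius `t` finite and non-null.
  have hfin : ∀ p : M, μ (ball p t) ≠ ⊤ := fun p => by
    have h := (hdoubling p (t / 2) (by positivity)).2.2
    rw [mul_div_cancel₀ t two_ne_zero] at h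
    exact h.ne
  have hpos : ∀ p : M, 0 < (μ (ball p t)).toReal := fun p => by
    have h := (hdoubling p (t / 2) (by positivity)).1
    rw [mul_div_cancel₀ t two_ne_zero] at h
    exact ENNReal.toReal_pos h.ne' (hfin p)
  have hbc : (μ (ball y t)).toReal
      ≤ C₁ * (1 + dist y z / t) ^ n' * (μ (ball z t)).toReal := by
    have h := ENNReal.toReal_mono (ENNReal.mul_ne_top ENNReal.ofReal_ne_top (hfin z))
      (hcomp y z t ht)
    rwa [ENNReal.toReal_mul, ENNReal.toReal_ofReal (by positivity)] at h
  have ha := hpos x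
  have hb := hpos y
  have hc := hpos z
  have hxy0 : 0 ≤ dist x y := dist_nonneg
  have hvu : 1 + dist y z / t ≤ 1 + dist x y / t := by
    gcongr
    linarith
  have huw : (1 + dist x y / t) / 2 ≤ 1 + dist x z / t := by
    have h1 : dist x y / 2 ≤ dist x z := by
      linarith [dist_triangle x z y, dist_comm y z]
    have h2 : dist x y / 2 / t ≤ dist x z / t := by gcongr
    rw [div_right_comm] at h2
    linarith
  have hu : 0 < 1 + dist x y / t := by positivity
  unfold Dker
  generalize (μ (ball x t)).toReal = a at *
  generalize (μ (ball y t)).toReal = b at *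
  generalize (μ (ball z t)).toReal = c at *
  generalize 1 + dist x y / t = u at *
  have hbc' : b ≤ C₁ * u ^ n' * c := hbc.trans (by gcongr)
  have hvol : (a * c) ^ (-(1 / 2 : ℝ))
      ≤ C₁ ^ (1 / 2 : ℝ) * u ^ (n' / 2) * (a * b) ^ (-(1 / 2 : ℝ)) := by
    have hK : 0 < C₁ * u ^ n' := by positivity
    have hle : a * b / (C₁ * u ^ n') ≤ a * c := by
      rw [div_le_iff₀ hK]
      nlinarith [mul_le_mul_of_nonneg_left hbc' ha.le]
    calc (a * c) ^ (-(1 / 2 : ℝ))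
        ≤ (a * b / (C₁ * u ^ n')) ^ (-(1 / 2 : ℝ)) :=
          Real.rpow_le_rpow_of_nonpos (by positivity) hle (by norm_num)
      _ = C₁ ^ (1 / 2 : ℝ) * u ^ (n' / 2) * (a * b) ^ (-(1 / 2 : ℝ)) := by
          rw [Real.div_rpow (by positivity) hK.le, Real.rpow_neg hK.le, div_inv_eq_mul,
            Real.mul_rpow hC₁.le (by positivity), ← Real.rpow_mul hu.le, mul_one_div, mul_comm]
  have hdec : (1 + dist x z / t) ^ (-σ) ≤ 2 ^ σ * u ^ (-σ) := by
    calc (1 + dist x z / t) ^ (-σ) ≤ (u / 2) ^ (-σ) :=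
          Real.rpow_le_rpow_of_nonpos (by positivity) huw (by linarith)
      _ = 2 ^ σ * u ^ (-σ) := by
          rw [Real.div_rpow hu.le zero_le_two, Real.rpow_neg zero_le_two, div_inv_eq_mul, mul_comm]
  have hexp : u ^ (-(σ - n' / 2)) = u ^ (n' / 2) * u ^ (-σ) := by
    rw [← Real.rpow_add hu]
    congr 1
    ring
  calc (a * c) ^ (-(1 / 2 : ℝ)) * (1 + dist x z / t) ^ (-σ)
      ≤ (C₁ ^ (1 / 2 : ℝ) * u ^ (n' / 2) * (a * b) ^ (-(1 / 2 : ℝ))) * (2 ^ σ * u ^ (-σ)) := by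
        gcongr
    _ = C₁ ^ (1 / 2 : ℝ) * 2 ^ σ * ((a * b) ^ (-(1 / 2 : ℝ)) * u ^ (-(σ - n' / 2))) := by
        rw [hexp]
        ring
end

section
/- Let (M, ρ, μ) be a metric measure space satisfying the doubling condition and the comparability property with exponent n' ∈ [0, ∞). Then for every σ ≥ n'/2 there is a constant C > 0 such that for all t > 0 and all x, y, z ∈ M with ρ(y,z) ≥ ρ(x,y)/2, one has D_{t,σ}(x,z) ≤ C ( μ(B(x,t)) μ(B(y,t)) )^{-1/2} (1 + ρ(x,y)/t)^{n'/2}. -/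
/-!
Write `V(w) = μ(B(w,t))`. Comparability gives `V(y) ≤ C₁ (1 + ρ(y,z)/t)^{n'} V(z)`, and the triangle
inequality gives `1 + ρ(y,z)/t ≤ (1 + ρ(x,y)/t)(1 + ρ(x,z)/t)`. Hence
`V(z)^{-1/2} ≤ C₁^{1/2} V(y)^{-1/2} (1 + ρ(x,y)/t)^{n'/2} (1 + ρ(x,z)/t)^{n'/2}`, and the last factor
is absorbed by `(1 + ρ(x,z)/t)^{-σ}` because `σ ≥ n'/2`. So `C = C₁^{1/2}` works.
-/

open MeasureTheory Metric

/-- The pointwise inequality behind the estimate, with `v, w` in the role of `V(y), V(z)` and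
`a, b` in the role of `1 + ρ(x,y)/t, 1 + ρ(x,z)/t`. -/
lemma rpow_neg_half_mul_le {v w a b c n σ : ℝ} (hv : 0 < v) (hw : 0 < w) (ha : 1 ≤ a)
    (hb : 1 ≤ b) (hc : 0 < c) (hσ : n / 2 ≤ σ) (h : v ≤ c * (a * b) ^ n * w) :
    w ^ (-(1 / 2 : ℝ)) * b ^ (-σ) ≤ c ^ (1 / 2 : ℝ) * v ^ (-(1 / 2 : ℝ)) * a ^ (n / 2) := by
  have ha0 : 0 < a := by linarith
  have hb0 : 0 < b := by linarith
  have h1 : v ^ (1 / 2 : ℝ) ≤ c ^ (1 / 2 : ℝ) * (a ^ (n / 2) * b ^ (n / 2)) * w ^ (1 / 2 : ℝ) := by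
    refine (Real.rpow_le_rpow hv.le h (by norm_num)).trans_eq ?_
    rw [Real.mul_rpow (by positivity) hw.le, Real.mul_rpow hc.le (by positivity),
      ← Real.rpow_mul (by positivity), Real.mul_rpow ha0.le hb0.le, mul_one_div]
  have h2 : b ^ (n / 2) ≤ b ^ σ := Real.rpow_le_rpow_of_exponent_le hb hσ
  have hv' := Real.rpow_pos_of_pos hv (1 / 2)
  have hw' := Real.rpow_pos_of_pos hw (1 / 2)
  have hbσ := Real.rpow_pos_of_pos hb0 σ
  rw [Real.rpow_neg hw.le, Real.rpow_neg hv.le, Real.rpow_neg hb0.le, ← mul_inv,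
    inv_le_iff_one_le_mul₀ (by positivity)]
  have h3 : v ^ (1 / 2 : ℝ) ≤
      c ^ (1 / 2 : ℝ) * (a ^ (n / 2) * b ^ σ) * w ^ (1 / 2 : ℝ) := h1.trans (by gcongr)
  calc (1 : ℝ) = (v ^ (1 / 2 : ℝ))⁻¹ * v ^ (1 / 2 : ℝ) := (inv_mul_cancel₀ hv'.ne').symm
    _ ≤ (v ^ (1 / 2 : ℝ))⁻¹ * (c ^ (1 / 2 : ℝ) * (a ^ (n / 2) * b ^ σ) * w ^ (1 / 2 : ℝ)) := by
      gcongr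
    _ = _ := by ring

/-- Under the doubling condition and the comparability property with exponent
`n' ≥ 0`, for every `σ ≥ n'/2` there is `C > 0` such that for all `t > 0` and all `x, y, z`
with `ρ(y,z) ≥ ρ(x,y)/2`, one has
`D_{t,σ}(x,z) ≤ C (μ(B(x,t)) μ(B(y,t)))^{-1/2} (1 + ρ(x,y)/t)^{n'/2}`. -/
theorem Dker_le_of_dist_ge
    {M : Type*} [MetricSpace M] [MeasurableSpace M] (μ : Measure M)
    (c₀ : ℝ) (hc₀ : 1 < c₀)
    (hdoubling : ∀ (x : M) (r : ℝ), 0 < r →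
      0 < μ (ball x (2 * r)) ∧
      μ (ball x (2 * r)) ≤ ENNReal.ofReal c₀ * μ (ball x r) ∧
      μ (ball x (2 * r)) < ⊤)
    (n' : ℝ) (hn'0 : 0 ≤ n') (C₁ : ℝ) (hC₁ : 0 < C₁)
    (hcomp : ∀ (x y : M) (r : ℝ), 0 < r →
      μ (ball x r) ≤ ENNReal.ofReal (C₁ * (1 + dist x y / r) ^ n') * μ (ball y r)) :
    ∀ σ : ℝ, n' / 2 ≤ σ → ∃ C : ℝ, 0 < C ∧
      ∀ (t : ℝ), 0 < t → ∀ x y z : M, dist x y / 2 ≤ dist y z →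
        Dker μ t σ x z ≤
          C * ((μ (ball x t)).toReal * (μ (ball y t)).toReal) ^ (-(1 / 2 : ℝ)) *
            (1 + dist x y / t) ^ (n' / 2) := by
  intro σ hσ
  refine ⟨C₁ ^ (1 / 2 : ℝ), by positivity, fun t ht x y z _ => ?_⟩
  have hfin : ∀ w : M, μ (ball w t) < ⊤ := fun w => by
    have := (hdoubling w (t / 2) (by positivity)).2.2
    rwa [mul_div_cancel₀ t two_ne_zero] at this
  have hpos : ∀ w : M, 0 < (μ (ball w t)).toReal := fun w => by
    have := (hdoubling w (t / 2) (by positivity)).1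
    rw [mul_div_cancel₀ t two_ne_zero] at this
    exact ENNReal.toReal_pos this.ne' (hfin w).ne
  have hxy : 0 ≤ dist x y / t := by positivity
  have hxz : 0 ≤ dist x z / t := by positivity
  have htri : 1 + dist y z / t ≤ (1 + dist x y / t) * (1 + dist x z / t) := by
    have : dist y z / t ≤ dist x y / t + dist x z / t := by
      rw [← add_div]
      gcongr
      exact dist_triangle_left y z x
    nlinarith [mul_nonneg hxy hxz]
  have hV : (μ (ball y t)).toReal ≤
      C₁ * ((1 + dist x y / t) * (1 + dist x z / t)) ^ n' * (μ (ball z t)).toReal := by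
    have h := ENNReal.toReal_mono (ENNReal.mul_ne_top ENNReal.ofReal_ne_top (hfin z).ne)
      (hcomp y z t ht)
    rw [ENNReal.toReal_mul, ENNReal.toReal_ofReal (by positivity)] at h
    exact h.trans (by gcongr)
  have key := rpow_neg_half_mul_le (hpos y) (hpos z) (le_add_of_nonneg_right hxy)
    (le_add_of_nonneg_right hxz) hC₁ hσ hV
  have hx := Real.rpow_nonneg (hpos x).le (-(1 / 2))
  have := mul_le_mul_of_nonneg_left key hx
  rw [Dker, Real.mul_rpow (hpos x).le (hpos z).le, Real.mul_rpow (hpos x).le (hpos y).le]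
  calc _ = _ := by ring
    _ ≤ _ := this
    _ = _ := by ring
end

section
/- Let (M, ρ, μ) be a metric measure space satisfying the doubling condition, the strong homogeneity property with exponent n, and the comparability property with exponent n' ∈ [0, n]. Suppose σ > n + n'/2. Then there is a constant C > 0 such that for all x, y ∈ M and all 0 < s ≤ t < ρ(x,y), ∫_{{z ∈ M : ρ(z,y) ≥ ρ(x,y)/2}} D_{s,σ}(z,y) dμ(z) ≤ C (1 + ρ(x,y)/t)^{−σ + n + n'/2}. -/
open MeasureTheory Metric

/-- If `b ≤ Q a`, then the geometric-mean weight `(ab)^(-1/2)` is at most `Q^(1/2) / b`. -/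
lemma rpow_neg_half_mul_le_s9 {a b Q : ℝ} (hb : 0 < b) (hQ : 0 < Q) (h : b ≤ Q * a) :
    (a * b) ^ (-(1 / 2 : ℝ)) ≤ Q ^ (1 / 2 : ℝ) / b := by
  have h1 : b ^ 2 / Q ≤ a * b := by
    rw [div_le_iff₀ hQ]
    nlinarith
  calc (a * b) ^ (-(1 / 2 : ℝ)) ≤ (b ^ 2 / Q) ^ (-(1 / 2 : ℝ)) :=
        Real.rpow_le_rpow_of_nonpos (by positivity) h1 (by norm_num)
    _ = Q ^ (1 / 2 : ℝ) / b := by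
        rw [Real.rpow_neg (by positivity), Real.div_rpow (by positivity) hQ.le, inv_div,
          ← Real.sqrt_eq_rpow (b ^ 2), Real.sqrt_sq hb.le]

/-- Kernel bound on the shell `R/2 ≤ ρ(z,y)/s ≤ R`, with `μ(B(z,s))` traded for `μ(B(y,s))`. -/
lemma Dker_le_of_shell {M : Type*} [MetricSpace M] [MeasurableSpace M] {μ : Measure M}
    {n' C₁ σ s R : ℝ} {y z : M}
    (hpos : ∀ w : M, 0 < μ (ball w s)) (hfin : ∀ w : M, μ (ball w s) < ⊤)
    (hn'0 : 0 ≤ n') (hC₁ : 0 < C₁) (hσ : 0 ≤ σ)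
    (hcomp : μ (ball y s) ≤ ENNReal.ofReal (C₁ * (1 + dist y z / s) ^ n') * μ (ball z s))
    (hs : 0 < s) (hR : 1 ≤ R) (h1 : R / 2 ≤ dist z y / s) (h2 : dist z y / s ≤ R) :
    Dker μ s σ z y ≤
      (C₁ * 2 ^ n') ^ (1 / 2 : ℝ) * 2 ^ σ * R ^ (n' / 2 - σ) / (μ (ball y s)).toReal := by
  have hb : 0 < (μ (ball y s)).toReal := ENNReal.toReal_pos (hpos y).ne' (hfin y).ne
  have hR0 : 0 < R := by linarith
  have hQ : 0 < C₁ * (2 * R) ^ n' := by positivity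
  have hd : 0 ≤ dist z y / s := by positivity
  have hab : (μ (ball y s)).toReal ≤ C₁ * (2 * R) ^ n' * (μ (ball z s)).toReal := by
    rw [dist_comm y z] at hcomp
    have h := ENNReal.toReal_mono (ENNReal.mul_ne_top ENNReal.ofReal_ne_top (hfin z).ne) hcomp
    rw [ENNReal.toReal_mul, ENNReal.toReal_ofReal (by positivity)] at h
    refine h.trans ?_
    gcongr
    linarith
  unfold Dker
  calc ((μ (ball z s)).toReal * (μ (ball y s)).toReal) ^ (-(1 / 2 : ℝ)) *
        (1 + dist z y / s) ^ (-σ)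
      ≤ (C₁ * (2 * R) ^ n') ^ (1 / 2 : ℝ) / (μ (ball y s)).toReal * (R / 2) ^ (-σ) := by
        gcongr ?_ * ?_
        · exact rpow_neg_half_mul_le_s9 hb hQ hab
        · exact Real.rpow_le_rpow_of_nonpos (by positivity) (by linarith) (by linarith)
    _ = _ := by
        rw [Real.mul_rpow (by norm_num) hR0.le, ← mul_assoc,
          Real.mul_rpow (by positivity) (by positivity), ← Real.rpow_mul hR0.le,
          Real.div_rpow hR0.le (by norm_num), Real.rpow_neg (by norm_num : (0 : ℝ) ≤ 2),
          show n' / 2 - σ = n' * (1 / 2) + -σ by ring, Real.rpow_add hR0]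
        field_simp

lemma lintegral_shell_le {M : Type*} [MetricSpace M] [MeasurableSpace M] {μ : Measure M}
    {n n' C₀ C₁ σ s R : ℝ} {y : M}
    (hpos : ∀ w : M, 0 < μ (ball w s)) (hfin : ∀ w : M, μ (ball w s) < ⊤)
    (hn'0 : 0 ≤ n') (hC₀ : 0 < C₀) (hC₁ : 0 < C₁) (hσ : 0 ≤ σ)
    (hhom : μ (ball y (R * s)) ≤ ENNReal.ofReal (C₀ * R ^ n) * μ (ball y s))
    (hcomp : ∀ z : M,
      μ (ball y s) ≤ ENNReal.ofReal (C₁ * (1 + dist y z / s) ^ n') * μ (ball z s))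
    (hs : 0 < s) (hR : 1 ≤ R) :
    ∫⁻ z in {z : M | R / 2 ≤ dist z y / s ∧ dist z y / s < R},
        ENNReal.ofReal (Dker μ s σ z y) ∂μ ≤
      ENNReal.ofReal (C₀ * ((C₁ * 2 ^ n') ^ (1 / 2 : ℝ) * 2 ^ σ) * R ^ (-σ + n + n' / 2)) := by
  have hb : 0 < (μ (ball y s)).toReal := ENNReal.toReal_pos (hpos y).ne' (hfin y).ne
  have hR0 : 0 < R := by linarith
  set K : ℝ := (C₁ * 2 ^ n') ^ (1 / 2 : ℝ) * 2 ^ σ with hK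
  have hK0 : 0 < K := by positivity
  have hsub : {z : M | R / 2 ≤ dist z y / s ∧ dist z y / s < R} ⊆ ball y (R * s) := by
    rintro z ⟨-, hz⟩
    rwa [div_lt_iff₀ hs] at hz
  calc ∫⁻ z in {z : M | R / 2 ≤ dist z y / s ∧ dist z y / s < R},
        ENNReal.ofReal (Dker μ s σ z y) ∂μ
      ≤ ∫⁻ _ in {z : M | R / 2 ≤ dist z y / s ∧ dist z y / s < R},
        ENNReal.ofReal (K * R ^ (n' / 2 - σ) / (μ (ball y s)).toReal) ∂μ :=
        setLIntegral_mono measurable_const fun z hz => ENNReal.ofReal_le_ofReal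
          (Dker_le_of_shell hpos hfin hn'0 hC₁ hσ (hcomp z) hs hR hz.1 hz.2.le)
    _ ≤ ENNReal.ofReal (K * R ^ (n' / 2 - σ) / (μ (ball y s)).toReal) *
        (ENNReal.ofReal (C₀ * R ^ n) * ENNReal.ofReal (μ (ball y s)).toReal) := by
        rw [setLIntegral_const, ENNReal.ofReal_toReal (hfin y).ne]
        gcongr
        exact (measure_mono hsub).trans hhom
    _ = _ := by
        rw [← ENNReal.ofReal_mul (by positivity), ← ENNReal.ofReal_mul (by positivity),
          show -σ + n + n' / 2 = (n' / 2 - σ) + n by ring, Real.rpow_add hR0]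
        congr 1
        field_simp

/-- Under the doubling condition, the strong homogeneity property with exponent
`n`, and the comparability property with exponent `n' ∈ [0,n]`, if `σ > n + n'/2` then there is
`C > 0` such that for all `x, y ∈ M` and all `0 < s ≤ t < ρ(x,y)`,
`∫_{{z : ρ(z,y) ≥ ρ(x,y)/2}} D_{s,σ}(z,y) dμ(z) ≤ C (1 + ρ(x,y)/t)^{-σ + n + n'/2}`. -/
theorem integral_Dker_far_le
    {M : Type*} [MetricSpace M] [MeasurableSpace M] (μ : Measure M)
    (c₀ : ℝ) (hc₀ : 1 < c₀)
    (hdoubling : ∀ (x : M) (r : ℝ), 0 < r →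
      0 < μ (ball x (2 * r)) ∧
      μ (ball x (2 * r)) ≤ ENNReal.ofReal c₀ * μ (ball x r) ∧
      μ (ball x (2 * r)) < ⊤)
    (n : ℝ) (hn : 0 < n) (C₀ : ℝ) (hC₀ : 0 < C₀)
    (hhom : ∀ (x : M) (r lam : ℝ), 0 < r → 1 ≤ lam →
      μ (ball x (lam * r)) ≤ ENNReal.ofReal (C₀ * lam ^ n) * μ (ball x r))
    (n' : ℝ) (hn'0 : 0 ≤ n') (hn'n : n' ≤ n) (C₁ : ℝ) (hC₁ : 0 < C₁)
    (hcomp : ∀ (x y : M) (r : ℝ), 0 < r →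
      μ (ball x r) ≤ ENNReal.ofReal (C₁ * (1 + dist x y / r) ^ n') * μ (ball y r))
    (σ : ℝ) (hσ : n + n' / 2 < σ) :
    ∃ C : ℝ, 0 < C ∧ ∀ (x y : M) (s t : ℝ), 0 < s → s ≤ t → t < dist x y →
      ∫⁻ z in {z : M | dist x y / 2 ≤ dist z y}, ENNReal.ofReal (Dker μ s σ z y) ∂μ ≤
        ENNReal.ofReal (C * (1 + dist x y / t) ^ (-σ + n + n' / 2)) := by
  have hσ0 : 0 ≤ σ := by linarith
  set e : ℝ := -σ + n + n' / 2 with he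
  have he0 : e < 0 := by linarith
  set K : ℝ := C₀ * ((C₁ * 2 ^ n') ^ (1 / 2 : ℝ) * 2 ^ σ) with hK
  have hK0 : 0 < K := by positivity
  -- The ratio of the geometric series over the dyadic shells.
  set q : ℝ := 2 ^ e with hq
  have hq0 : 0 < q := by positivity
  have hq1 : q < 1 := Real.rpow_lt_one_of_one_lt_of_neg (by norm_num) he0
  have hq1' : 0 < 1 - q := by linarith
  refine ⟨K * 2 ^ (-e) * (1 - q)⁻¹, by positivity, ?_⟩
  intro x y s t hs hst htd
  have ht : 0 < t := hs.trans_le hst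
  set d := dist x y with hd
  have hd0 : 0 < d := ht.trans htd
  have hds : 1 ≤ d / s := by rw [one_le_div hs]; linarith
  have hdt : 1 ≤ d / t := by rw [one_le_div ht]; linarith
  have hpos : ∀ w : M, 0 < μ (ball w s) := fun w => by
    have h := (hdoubling w (s / 2) (by positivity)).1
    rwa [mul_div_cancel₀ s two_ne_zero] at h
  have hfin : ∀ w : M, μ (ball w s) < ⊤ := fun w => by
    have h := (hdoubling w (s / 2) (by positivity)).2.2
    rwa [mul_div_cancel₀ s two_ne_zero] at h
  have hR : ∀ k : ℕ, 1 ≤ 2 ^ k * (d / s) := fun k =>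
    one_le_mul_of_one_le_of_one_le (one_le_pow₀ one_le_two) hds
  have hcover : {z : M | d / 2 ≤ dist z y} ⊆ ⋃ k : ℕ,
      {z : M | 2 ^ k * (d / s) / 2 ≤ dist z y / s ∧ dist z y / s < 2 ^ k * (d / s)} := by
    intro z hz
    have hz' : d / 2 ≤ dist z y := hz
    obtain ⟨k, hk1, hk2⟩ := exists_nat_pow_near (x := 2 * dist z y / d) (y := (2 : ℝ))
      (by rw [one_le_div hd0]; linarith) (by norm_num)
    rw [le_div_iff₀ hd0] at hk1
    rw [div_lt_iff₀ hd0, pow_succ] at hk2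
    refine Set.mem_iUnion.2 ⟨k, ?_, ?_⟩
    · rw [← mul_div_assoc, div_right_comm]
      gcongr
      linarith
    · rw [← mul_div_assoc]
      gcongr
      linarith
  have hterm : ∀ k : ℕ, K * (2 ^ k * (d / s)) ^ e = K * (d / s) ^ e * q ^ k := fun k => by
    rw [Real.mul_rpow (by positivity) (by positivity), hq, ← Real.rpow_natCast,
      ← Real.rpow_natCast, ← Real.rpow_mul (by norm_num), ← Real.rpow_mul (by norm_num),
      mul_comm (k : ℝ) e]
    ring
  calc ∫⁻ z in {z : M | d / 2 ≤ dist z y}, ENNReal.ofReal (Dker μ s σ z y) ∂μ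
      ≤ ∫⁻ z in ⋃ k : ℕ,
          {z : M | 2 ^ k * (d / s) / 2 ≤ dist z y / s ∧ dist z y / s < 2 ^ k * (d / s)},
          ENNReal.ofReal (Dker μ s σ z y) ∂μ := lintegral_mono_set hcover
    _ ≤ ∑' k : ℕ, ∫⁻ z in
          {z : M | 2 ^ k * (d / s) / 2 ≤ dist z y / s ∧ dist z y / s < 2 ^ k * (d / s)},
          ENNReal.ofReal (Dker μ s σ z y) ∂μ := lintegral_iUnion_le _ _
    _ ≤ ∑' k : ℕ, ENNReal.ofReal (K * (d / s) ^ e * q ^ k) := by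
        refine ENNReal.tsum_le_tsum fun k => ?_
        rw [← hterm]
        exact lintegral_shell_le hpos hfin hn'0 hC₀ hC₁ hσ0 (hhom y s _ hs (hR k))
          (fun z => hcomp y z s hs) hs (hR k)
    _ = ENNReal.ofReal (K * (d / s) ^ e * (1 - q)⁻¹) := by
        rw [← ENNReal.ofReal_tsum_of_nonneg (fun k => by positivity)
          ((summable_geometric_of_lt_one hq0.le hq1).mul_left _), tsum_mul_left,
          tsum_geometric_of_lt_one hq0.le hq1]
    _ ≤ ENNReal.ofReal (K * 2 ^ (-e) * (1 - q)⁻¹ * (1 + d / t) ^ e) := by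
        apply ENNReal.ofReal_le_ofReal
        have h1 : (d / s) ^ e ≤ 2 ^ (-e) * (1 + d / t) ^ e := by
          calc (d / s) ^ e ≤ ((1 + d / t) / 2) ^ e := by
                refine Real.rpow_le_rpow_of_nonpos (by positivity) ?_ he0.le
                have : d / t ≤ d / s := by gcongr
                linarith
            _ = 2 ^ (-e) * (1 + d / t) ^ e := by
                rw [Real.div_rpow (by positivity) (by norm_num), Real.rpow_neg (by norm_num)]
                ring
        calc K * (d / s) ^ e * (1 - q)⁻¹
            ≤ K * (2 ^ (-e) * (1 + d / t) ^ e) * (1 - q)⁻¹ := by gcongr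
          _ = _ := by ring
end

section
/- Let (M, ρ, μ) be a metric measure space whose Borel measure satisfies the doubling condition. Suppose 1 < p < ∞ and 1 < q ≤ ∞. Then there exists a constant C > 0 such that for every sequence {f_j}_{j=1}^∞ of measurable functions on M, ‖ ( Σ_j (𝓜f_j)^q )^{1/q} ‖_{L^p(μ)} ≤ C ‖ ( Σ_j |f_j|^q )^{1/q} ‖_{L^p(μ)} (with the usual modification, sup over j, when q = ∞), where 𝓜f(x) := sup_{B ∋ x} μ(B)^{-1} ∫_B |f(y)| dμ(y) is the Hardy–Littlewood maximal function (the supremum ranging over all open balls B containing x). -/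
/-!
The proof reduces the vector-valued inequality to weighted scalar inequalities by extrapolation.

For a doubling measure, the Vitali covering lemma gives the weak type `(1,1)` bound for the uncentred
maximal function, and the layer-cake formula turns it into the `L^q` bound for `1 < q < ∞`
(`Doubling.strong`). The case `q = ∞` follows at once, since `sup_j 𝓜f_j ≤ 𝓜(sup_j |f_j|)`.

If `w` is an `A₁` weight, meaning `𝓜w ≤ A w`, then `w dμ` is again doubling (`A1.doubling`), and with
`𝓜_w` its maximal function there are the pointwise bounds `𝓜f ≤ A 𝓜_w f` and `𝓜f ≤ A w 𝓜_w(f / w)`.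
Hence `𝓜` is bounded on `L^q(w)` and on `L^q(w ^ (1 - q))` (`A1.weighted`, `A1.weighted_dual`). Both
bounds can be summed over `j`.

For `p = q < ∞` nothing more is needed. For `p ≠ q` a suitable `A₁` weight comes from the Rubio de
Francia algorithm (`rubioDeFrancia`): every nonzero `F` in `L^s`, `s > 1`, has an `A₁` majorant of comparable
`L^s` norm. For `p < q` it is applied to `(∑ |f_j| ^ q) ^ (1/q)` in `L^p` (`vector_lt`), for `q < p` to
a function in the dual of `L^(p/q)` (`vector_gt`).
-/

open MeasureTheory Metric ENNReal

/-- The `L^p(μ)` quasi-norm (`0 < p ≤ ∞`) of an `ℝ≥0∞`-valued function, with the essential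
supremum when `p = ∞`. -/
noncomputable def pNorm {M : Type*} [MeasurableSpace M] (μ : Measure M) (p : ℝ≥0∞)
    (h : M → ℝ≥0∞) : ℝ≥0∞ :=
  if p = ∞ then essSup h μ else (∫⁻ x, h x ^ p.toReal ∂μ) ^ (1 / p.toReal)

/-- The `ℓ^q` quasi-norm (`1 < q ≤ ∞`) of a sequence in `ℝ≥0∞`, with the supremum
when `q = ∞` (the "usual modification"). -/
noncomputable def qSum (q : ℝ≥0∞) (g : ℕ → ℝ≥0∞) : ℝ≥0∞ :=
  if q = ∞ then ⨆ j, g j else (∑' j, g j ^ q.toReal) ^ (1 / q.toReal)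

namespace FeffermanStein

/-! ### The maximal function of a doubling measure -/

variable {M : Type*} [MetricSpace M] [MeasurableSpace M]

/-- The uncentred maximal function of an `ℝ≥0∞`-valued function with respect to `ν`. Allowing the
value `∞` makes it possible to iterate the operator and to apply it to suprema and infinite sums. -/
noncomputable def maxFn (ν : Measure M) (f : M → ℝ≥0∞) (x : M) : ℝ≥0∞ :=
  ⨆ (z : M) (r : ℝ) (_ : x ∈ ball z r), (ν (ball z r))⁻¹ * ∫⁻ y in ball z r, f y ∂ν

/-- `ν` is doubling with constant `K`, and balls have positive finite measure. -/
structure Doubling (ν : Measure M) (K : ℝ≥0∞) : Prop where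
  pos : ∀ (x : M) (r : ℝ), 0 < r → ν (ball x r) ≠ 0
  fin : ∀ (x : M) (r : ℝ), ν (ball x r) ≠ ∞
  dbl : ∀ (x : M) (r : ℝ), 0 < r → ν (ball x (2 * r)) ≤ K * ν (ball x r)

theorem le_maxFn {ν : Measure M} {f : M → ℝ≥0∞} {x z : M} {r : ℝ} (hx : x ∈ ball z r) :
    (ν (ball z r))⁻¹ * ∫⁻ y in ball z r, f y ∂ν ≤ maxFn ν f x :=
  le_iSup₂_of_le z r (le_iSup_of_le hx le_rfl)

theorem maxFn_le {ν : Measure M} {f : M → ℝ≥0∞} {x : M} {a : ℝ≥0∞}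
    (h : ∀ z r, x ∈ ball z r → (ν (ball z r))⁻¹ * ∫⁻ y in ball z r, f y ∂ν ≤ a) :
    maxFn ν f x ≤ a :=
  iSup₂_le fun z r => iSup_le fun hx => h z r hx

theorem maxFn_mono {ν : Measure M} {f g : M → ℝ≥0∞} (h : ∀ x, f x ≤ g x) (x : M) :
    maxFn ν f x ≤ maxFn ν g x :=
  maxFn_le fun _ _ hx => (mul_le_mul_right (lintegral_mono h) _).trans (le_maxFn hx)

theorem pos_of_mem {M : Type*} [MetricSpace M] {x z : M} {r : ℝ} (hx : x ∈ ball z r) : 0 < r :=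
  dist_nonneg.trans_lt hx

/-- The superlevel sets are unions of open balls, hence open. -/
theorem lt_maxFn_eq (ν : Measure M) (f : M → ℝ≥0∞) (a : ℝ≥0∞) :
    {x | a < maxFn ν f x} = ⋃ (z : M) (r : ℝ)
      (_ : a < (ν (ball z r))⁻¹ * ∫⁻ y in ball z r, f y ∂ν), ball z r := by
  ext x
  simp only [maxFn, Set.mem_ofPred_eq, lt_iSup_iff, Set.mem_iUnion, exists_prop]
  constructor
  · rintro ⟨z, r, h1, h2⟩; exact ⟨z, r, h2, h1⟩
  · rintro ⟨z, r, h1, h2⟩; exact ⟨z, r, h2, h1⟩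

theorem measurable_maxFn [BorelSpace M] (ν : Measure M) (f : M → ℝ≥0∞) :
    Measurable (maxFn ν f) := by
  refine measurable_of_Ioi fun a => IsOpen.measurableSet ?_
  change IsOpen {x | a < maxFn ν f x}
  rw [lt_maxFn_eq]
  exact isOpen_iUnion fun z => isOpen_iUnion fun r => isOpen_iUnion fun _ => isOpen_ball

theorem Doubling.sigmaFinite {ν : Measure M} {K : ℝ≥0∞} (h : Doubling ν K) : SigmaFinite ν := by
  rcases isEmpty_or_nonempty M with hM | ⟨⟨x₀⟩⟩
  · have : ν = 0 := Measure.eq_zero_of_isEmpty ν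
    rw [this]; infer_instance
  · exact ⟨⟨{ set := fun n => ball x₀ n
              set_mem := fun _ => trivial
              finite := fun n => (h.fin x₀ n).lt_top
              spanning := iUnion_ball_nat x₀ }⟩⟩

/-- Weak type `(1,1)`: the superlevel set is exhausted by unions of balls of bounded radius, to which
the Vitali covering lemma applies. The factor `K ^ 3` comes from replacing the enlargement factor `5`
by `8 = 2 ^ 3`. -/
theorem Doubling.weak [BorelSpace M] {ν : Measure M} {K : ℝ≥0∞} (h : Doubling ν K)
    (f : M → ℝ≥0∞) (a : ℝ≥0∞) :
    a * ν {x | a < maxFn ν f x} ≤ K ^ 3 * ∫⁻ x, f x ∂ν := by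
  have := h.sigmaFinite
  let T : ℕ → Set (M × ℝ) := fun n =>
    {b | 0 < b.2 ∧ b.2 ≤ n ∧ a < (ν (ball b.1 b.2))⁻¹ * ∫⁻ y in ball b.1 b.2, f y ∂ν}
  have hU : {x | a < maxFn ν f x} = ⋃ n, ⋃ b ∈ T n, ball b.1 b.2 := by
    rw [lt_maxFn_eq]
    ext x
    simp only [Set.mem_iUnion, exists_prop]
    constructor
    · rintro ⟨z, r, h1, h2⟩
      obtain ⟨n, hn⟩ := exists_nat_ge r
      exact ⟨n, (z, r), ⟨pos_of_mem h2, hn, h1⟩, h2⟩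
    · rintro ⟨n, b, ⟨_, _, h1⟩, h2⟩
      exact ⟨b.1, b.2, h1, h2⟩
  have hmono : Monotone fun n => ⋃ b ∈ T n, ball b.1 b.2 := by
    intro m n hmn
    refine Set.biUnion_subset_biUnion_left ?_
    rintro b ⟨h1, h2, h3⟩
    exact ⟨h1, h2.trans (by exact_mod_cast hmn), h3⟩
  rw [hU, hmono.measure_iUnion, ENNReal.mul_iSup]
  refine iSup_le fun n => ?_
  obtain ⟨u, huT, hdisj, hcov⟩ := Vitali.exists_disjoint_subfamily_covering_enlargement_ball
    (T n) (fun b => b.1) (fun b => b.2) n (fun b hb => hb.2.1) 5 (by norm_num)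
  have hcount : u.Countable := by
    have hc := Measure.countable_meas_pos_of_disjoint_iUnion (μ := ν)
      (As := fun b : u => ball b.1.1 b.1.2) (fun b => measurableSet_ball)
      (fun b c hbc => hdisj b.2 c.2 (fun h => hbc (Subtype.ext h)))
    have : {b : u | 0 < ν (ball b.1.1 b.1.2)} = Set.univ := by
      ext b
      simpa using (pos_iff_ne_zero.2 (h.pos b.1.1 b.1.2 (huT b.2).1))
    rw [this] at hc
    exact Set.countable_coe_iff.1 (Set.countable_univ_iff.1 hc)
  have := hcount.to_subtype
  -- the enlargement by `5` is contained in the enlargement by `8`, three doublings away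
  have hsub : (⋃ b ∈ T n, ball b.1 b.2) ⊆ ⋃ b ∈ u, ball b.1 (2 * (2 * (2 * b.2))) := by
    intro x hx
    simp only [Set.mem_iUnion, exists_prop] at hx ⊢
    obtain ⟨b, hb, hx⟩ := hx
    obtain ⟨c, hc, hbc⟩ := hcov b hb
    refine ⟨c, hc, ball_subset_ball ?_ (hbc hx)⟩
    linarith [(huT hc).1]
  have hball : ∀ b ∈ u, a * ν (ball b.1 (2 * (2 * (2 * b.2)))) ≤
      K ^ 3 * ∫⁻ y in ball b.1 b.2, f y ∂ν := by
    intro b hb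
    obtain ⟨h1, _, h3⟩ := huT hb
    have e1 := h.dbl b.1 b.2 h1
    have e2 := h.dbl b.1 (2 * b.2) (by linarith)
    have e3 := h.dbl b.1 (2 * (2 * b.2)) (by linarith)
    have e4 : a * ν (ball b.1 b.2) ≤ ∫⁻ y in ball b.1 b.2, f y ∂ν := by
      rw [mul_comm]
      calc ν (ball b.1 b.2) * a ≤ ν (ball b.1 b.2) *
            ((ν (ball b.1 b.2))⁻¹ * ∫⁻ y in ball b.1 b.2, f y ∂ν) := by gcongr
        _ = _ := by
          rw [← mul_assoc, ENNReal.mul_inv_cancel (h.pos _ _ h1) (h.fin _ _), one_mul]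
    calc a * ν (ball b.1 (2 * (2 * (2 * b.2))))
        ≤ a * (K * (K * (K * ν (ball b.1 b.2)))) := by
          gcongr
          exact e3.trans (by gcongr; exact e2.trans (by gcongr))
      _ = K ^ 3 * (a * ν (ball b.1 b.2)) := by ring
      _ ≤ _ := by gcongr
  calc a * ν (⋃ b ∈ T n, ball b.1 b.2)
      ≤ a * ∑' b : u, ν (ball b.1.1 (2 * (2 * (2 * b.1.2)))) := by
        gcongr
        exact (measure_mono hsub).trans (measure_biUnion_le ν hcount _)
    _ = ∑' b : u, a * ν (ball b.1.1 (2 * (2 * (2 * b.1.2)))) := ENNReal.tsum_mul_left.symm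
    _ ≤ ∑' b : u, K ^ 3 * ∫⁻ y in ball b.1.1 b.1.2, f y ∂ν :=
        ENNReal.tsum_le_tsum fun b => hball b.1 b.2
    _ = K ^ 3 * ∑' b : u, ∫⁻ y in ball b.1.1 b.1.2, f y ∂ν := ENNReal.tsum_mul_left
    _ = K ^ 3 * ∫⁻ y in ⋃ b : u, ball b.1.1 b.1.2, f y ∂ν := by
        rw [lintegral_iUnion (s := fun b : u => ball b.1.1 b.1.2) (fun b => measurableSet_ball)
          (fun b c hbc => hdisj b.2 c.2 (fun h => hbc (Subtype.ext h)))]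
    _ ≤ _ := by gcongr; exact Measure.restrict_le_self

/-- The layer-cake formula for a single value `a : ℝ≥0∞`, including `a = ∞`. -/
theorem layer (s : ℝ) (hs : 0 < s) (a : ℝ≥0∞) :
    ∫⁻ t in Set.Ioi (0 : ℝ), (if ENNReal.ofReal t < a then ENNReal.ofReal (t ^ (s - 1)) else 0)
      = ENNReal.ofReal (1 / s) * a ^ s := by
  have key : ∀ b : ℝ, 0 ≤ b → ∫⁻ t in Set.Ioc 0 b, ENNReal.ofReal (t ^ (s - 1))
      = ENNReal.ofReal (1 / s) * ENNReal.ofReal b ^ s := by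
    intro b hb
    rw [← ofReal_integral_eq_lintegral_ofReal, ← intervalIntegral.integral_of_le hb,
      integral_rpow (Or.inl (by linarith)), ENNReal.ofReal_rpow_of_nonneg hb hs.le,
      ← ENNReal.ofReal_mul (by positivity)]
    · congr 1
      rw [sub_add_cancel, Real.zero_rpow hs.ne']
      ring
    · exact (intervalIntegrable_iff_integrableOn_Ioc_of_le hb).1
        (intervalIntegral.intervalIntegrable_rpow' (by linarith))
    · exact (ae_restrict_iff' measurableSet_Ioc).2 (.of_forall fun t ht =>
        Real.rpow_nonneg ht.1.le _)
  rcases eq_or_ne a ∞ with rfl | ha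
  · simp only [ENNReal.ofReal_lt_top, if_true, ENNReal.top_rpow_of_pos hs]
    rw [ENNReal.mul_top (by simpa using hs), eq_top_iff]
    refine ENNReal.le_of_forall_nnreal_lt fun c _ => ?_
    obtain ⟨n, hn⟩ : ∃ n : ℝ, 0 ≤ n ∧ 1 / s * n ^ s = c := by
      refine ⟨(s * c) ^ (1 / s), by positivity, ?_⟩
      rw [← Real.rpow_mul (by positivity), one_div_mul_cancel hs.ne', Real.rpow_one]
      field_simp
    calc (c : ℝ≥0∞) = ENNReal.ofReal (1 / s) * ENNReal.ofReal n ^ s := by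
          rw [ENNReal.ofReal_rpow_of_nonneg hn.1 hs.le, ← ENNReal.ofReal_mul (by positivity),
            hn.2, ENNReal.ofReal_coe_nnreal]
      _ = _ := (key n hn.1).symm
      _ ≤ _ := lintegral_mono_set Set.Ioc_subset_Ioi_self
  · lift a to NNReal using ha
    rw [← ENNReal.ofReal_coe_nnreal, ← key a a.2, ← Measure.restrict_congr_set Ioo_ae_eq_Ioc,
      ← lintegral_indicator measurableSet_Ioi, ← lintegral_indicator measurableSet_Ioo]
    congr 1
    ext t
    by_cases h0 : 0 < t
    · have : ENNReal.ofReal t < ENNReal.ofReal a ↔ t < a := ENNReal.ofReal_lt_ofReal_iff_of_nonneg h0.le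
      simp [Set.indicator, h0, ENNReal.ofReal_lt_coe_iff h0.le]
    · simp [Set.indicator, h0]

/-- The constant in the strong type `(q, q)` bound for a measure with doubling constant `K`. -/
noncomputable def strongConst (q : ℝ) (K : ℝ≥0∞) : ℝ≥0∞ :=
  ENNReal.ofReal q * (2 * K ^ 3 * (ENNReal.ofReal (1 / (q - 1)) * 2 ^ (q - 1)))

theorem maxFn_add_const_le [BorelSpace M] {ν : Measure M} {K : ℝ≥0∞} (h : Doubling ν K)
    (f : M → ℝ≥0∞) (c : ℝ≥0∞) (x : M) : maxFn ν (fun y => f y + c) x ≤ maxFn ν f x + c := by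
  refine maxFn_le fun z r hx => ?_
  rw [lintegral_add_right _ measurable_const, mul_add, lintegral_const,
    Measure.restrict_apply_univ, mul_comm c, ← mul_assoc,
    ENNReal.inv_mul_cancel (h.pos _ _ (pos_of_mem hx)) (h.fin _ _), one_mul]
  gcongr
  exact le_maxFn hx

/-- Weak type bound in which only the large values of `f` enter: values below `t / 2` contribute at
most `t / 2` to the maximal function. -/
theorem Doubling.weak' [BorelSpace M] {ν : Measure M} {K : ℝ≥0∞} (h : Doubling ν K)
    (f : M → ℝ≥0∞) (t : ℝ) (ht : 0 < t) :
    ENNReal.ofReal t * ν {x | ENNReal.ofReal t < maxFn ν f x} ≤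
      2 * K ^ 3 * ∫⁻ x, (if ENNReal.ofReal t < 2 * f x then f x else 0) ∂ν := by
  set g : M → ℝ≥0∞ := fun x => if ENNReal.ofReal t < 2 * f x then f x else 0 with hg
  have hle : ∀ x, f x ≤ g x + ENNReal.ofReal (t / 2) := by
    intro x
    by_cases hx : ENNReal.ofReal t < 2 * f x
    · simp [hg, hx]
    · simp only [hg, hx, if_false, zero_add]
      rw [ENNReal.ofReal_div_of_pos two_pos, ENNReal.le_div_iff_mul_le (by simp) (by simp)]
      simpa [mul_comm] using hx
  have hsub : {x | ENNReal.ofReal t < maxFn ν f x} ⊆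
      {x | ENNReal.ofReal (t / 2) < maxFn ν g x} := by
    intro x hx
    by_contra hx'
    simp only [Set.mem_ofPred_eq, not_lt] at hx hx'
    refine absurd hx (not_lt.2 ?_)
    calc maxFn ν f x ≤ maxFn ν g x + ENNReal.ofReal (t / 2) :=
          (maxFn_mono hle x).trans (maxFn_add_const_le h g _ x)
      _ ≤ ENNReal.ofReal (t / 2) + ENNReal.ofReal (t / 2) := by gcongr
      _ = _ := by rw [← ENNReal.ofReal_add (by positivity) (by positivity), add_halves]
  calc ENNReal.ofReal t * ν {x | ENNReal.ofReal t < maxFn ν f x}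
      ≤ ENNReal.ofReal t * ν {x | ENNReal.ofReal (t / 2) < maxFn ν g x} := by gcongr
    _ = 2 * (ENNReal.ofReal (t / 2) * ν {x | ENNReal.ofReal (t / 2) < maxFn ν g x}) := by
        rw [← mul_assoc]
        congr 1
        rw [← ENNReal.ofReal_ofNat 2, ← ENNReal.ofReal_mul (by positivity)]
        congr 1; ring
    _ ≤ 2 * (K ^ 3 * ∫⁻ x, g x ∂ν) := by gcongr 2 * ?_; exact h.weak g _
    _ = _ := by ring

/-- The Hardy–Littlewood maximal theorem, from `Doubling.weak'` by the layer-cake formula and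
Tonelli's theorem. -/
theorem Doubling.strong [BorelSpace M] {ν : Measure M} {K : ℝ≥0∞} (h : Doubling ν K)
    {q : ℝ} (hq : 1 < q) {f : M → ℝ≥0∞} (hf : Measurable f) :
    ∫⁻ x, maxFn ν f x ^ q ∂ν ≤ strongConst q K * ∫⁻ x, f x ^ q ∂ν := by
  have := h.sigmaFinite
  have hm := measurable_maxFn ν f
  have hq0 : 0 < q := by linarith
  have e1 : ∀ a : ℝ≥0∞, a ^ q = ENNReal.ofReal q * ∫⁻ t in Set.Ioi (0 : ℝ),
      (if ENNReal.ofReal t < a then ENNReal.ofReal (t ^ (q - 1)) else 0) := by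
    intro a
    rw [layer q hq0, ← mul_assoc, ← ENNReal.ofReal_mul hq0.le, mul_one_div_cancel hq0.ne',
      ENNReal.ofReal_one, one_mul]
  have hpow : ∀ s : ℝ, Measurable fun t : ℝ => ENNReal.ofReal (t ^ s) := fun s => by fun_prop
  calc ∫⁻ x, maxFn ν f x ^ q ∂ν
      = ENNReal.ofReal q * ∫⁻ x, (∫⁻ t in Set.Ioi (0 : ℝ),
        (if ENNReal.ofReal t < maxFn ν f x then ENNReal.ofReal (t ^ (q - 1)) else 0)) ∂ν := by
        rw [← lintegral_const_mul' _ _ ENNReal.ofReal_ne_top]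
        exact lintegral_congr fun x => e1 _
    _ = ENNReal.ofReal q * ∫⁻ t in Set.Ioi (0 : ℝ), ∫⁻ x,
        (if ENNReal.ofReal t < maxFn ν f x then ENNReal.ofReal (t ^ (q - 1)) else 0) ∂ν := by
        rw [lintegral_lintegral_swap]
        refine (Measurable.ite ?_ ((hpow _).comp measurable_snd) measurable_const).aemeasurable
        exact measurableSet_lt (ENNReal.measurable_ofReal.comp measurable_snd)
          (hm.comp measurable_fst)
    _ ≤ ENNReal.ofReal q * ∫⁻ t in Set.Ioi (0 : ℝ), (2 * K ^ 3) * ∫⁻ x,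
        f x * (if ENNReal.ofReal t < 2 * f x then ENNReal.ofReal (t ^ (q - 1 - 1)) else 0) ∂ν := by
        gcongr ENNReal.ofReal q * ?_
        refine setLIntegral_mono' measurableSet_Ioi fun t (ht : 0 < t) => ?_
        have hsp : ENNReal.ofReal (t ^ (q - 1)) =
            ENNReal.ofReal (t ^ (q - 1 - 1)) * ENNReal.ofReal t := by
          rw [← ENNReal.ofReal_mul (by positivity), Real.rpow_sub_one ht.ne' (q - 1),
            div_mul_cancel₀ _ ht.ne']
        have hset : MeasurableSet {x | ENNReal.ofReal t < maxFn ν f x} :=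
          measurableSet_lt measurable_const hm
        calc ∫⁻ x, (if ENNReal.ofReal t < maxFn ν f x
                then ENNReal.ofReal (t ^ (q - 1)) else 0) ∂ν
            = ENNReal.ofReal (t ^ (q - 1)) * ν {x | ENNReal.ofReal t < maxFn ν f x} := by
              rw [← lintegral_indicator_const hset]
              simp [Set.indicator]
          _ = ENNReal.ofReal (t ^ (q - 1 - 1)) *
                (ENNReal.ofReal t * ν {x | ENNReal.ofReal t < maxFn ν f x}) := by
              rw [hsp, mul_assoc]
          _ ≤ ENNReal.ofReal (t ^ (q - 1 - 1)) * (2 * K ^ 3 *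
                ∫⁻ x, (if ENNReal.ofReal t < 2 * f x then f x else 0) ∂ν) := by
              gcongr ENNReal.ofReal (t ^ (q - 1 - 1)) * ?_
              exact h.weak' f t ht
          _ = (2 * K ^ 3) * (ENNReal.ofReal (t ^ (q - 1 - 1)) *
                ∫⁻ x, (if ENNReal.ofReal t < 2 * f x then f x else 0) ∂ν) := by ring
          _ = _ := by
              rw [← lintegral_const_mul' _ _ ENNReal.ofReal_ne_top]
              congr 2
              ext x
              split_ifs
              · ring
              · simp
    _ = ENNReal.ofReal q * (2 * K ^ 3 * ∫⁻ x, (∫⁻ t in Set.Ioi (0 : ℝ),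
        f x * (if ENNReal.ofReal t < 2 * f x
          then ENNReal.ofReal (t ^ (q - 1 - 1)) else 0)) ∂ν) := by
        have hmeas : Measurable (Function.uncurry fun (t : ℝ) (x : M) => f x *
            (if ENNReal.ofReal t < 2 * f x then ENNReal.ofReal (t ^ (q - 1 - 1)) else 0)) := by
          refine (hf.comp measurable_snd).mul
            (Measurable.ite ?_ ((hpow _).comp measurable_fst) measurable_const)
          exact measurableSet_lt (ENNReal.measurable_ofReal.comp measurable_fst)
            ((hf.comp measurable_snd).const_mul 2)
        rw [lintegral_const_mul _ hmeas.lintegral_prod_right,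
          lintegral_lintegral_swap hmeas.aemeasurable]
    _ = ENNReal.ofReal q * (2 * K ^ 3 * ∫⁻ x,
        (ENNReal.ofReal (1 / (q - 1)) * 2 ^ (q - 1)) * f x ^ q ∂ν) := by
        congr 2
        refine lintegral_congr fun x => ?_
        rw [lintegral_const_mul, layer (q - 1) (by linarith),
          ENNReal.mul_rpow_of_nonneg _ _ (by linarith)]
        · have : f x ^ q = f x * f x ^ (q - 1) := by
            nth_rewrite 2 [← ENNReal.rpow_one (f x)]
            rw [← ENNReal.rpow_add_of_nonneg _ _ zero_le_one (by linarith)]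
            congr 1; ring
          rw [this]; ring
        · exact Measurable.ite (measurableSet_lt ENNReal.measurable_ofReal measurable_const)
            (hpow _) measurable_const
    _ = _ := by
        rw [lintegral_const_mul _ (hf.pow_const q), strongConst]
        ring

theorem strongConst_ne_top (q : ℝ) {K : ℝ≥0∞} (hK : K ≠ ∞) : strongConst q K ≠ ∞ := by
  unfold strongConst
  refine ENNReal.mul_ne_top ENNReal.ofReal_ne_top (ENNReal.mul_ne_top
    (ENNReal.mul_ne_top (by simp) (ENNReal.pow_ne_top hK))
    (ENNReal.mul_ne_top ENNReal.ofReal_ne_top ?_))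
  simp

/-! ### `A₁` weights -/

/-- `w` is an `A₁` weight for `μ` with constant `A`. The inequality `𝓜w ≤ A w` and positivity hold
at every point, while `w` may be infinite on a null set. -/
structure A1 (μ : Measure M) (w : M → ℝ≥0∞) (A : ℝ≥0∞) : Prop where
  meas : Measurable w
  pos : ∀ x, w x ≠ 0
  fin : ∀ᵐ x ∂μ, w x ≠ ∞
  le : ∀ x, maxFn μ w x ≤ A * w x

theorem maxFn_tsum_le {μ : Measure M} (c : ℕ → ℝ≥0∞) {I : ℕ → M → ℝ≥0∞} (hI : ∀ k, Measurable (I k)) (x : M) :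
    maxFn μ (fun y => ∑' k, c k * I k y) x ≤ ∑' k, c k * maxFn μ (I k) x := by
  refine maxFn_le fun z r hx => ?_
  rw [lintegral_tsum fun k => ((hI k).const_mul _).aemeasurable, ← ENNReal.tsum_mul_left]
  refine ENNReal.tsum_le_tsum fun k => ?_
  rw [lintegral_const_mul _ (hI k), mul_left_comm]
  gcongr
  exact le_maxFn hx

/-- Powers `w ^ θ` with `0 < θ < 1` of an `A₁` weight are `A₁` weights, by Jensen's inequality. -/
theorem A1.rpow {μ : Measure M} {K A : ℝ≥0∞} {w : M → ℝ≥0∞} (hμ : Doubling μ K) (hw : A1 μ w A)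
    {θ : ℝ} (h0 : 0 < θ) (h1 : θ < 1) :
    A1 μ (fun x => w x ^ θ) (A ^ θ) where
  meas := hw.meas.pow_const θ
  pos x := by simp [ENNReal.rpow_eq_zero_iff, hw.pos x, h0.le]
  fin := by
    filter_upwards [hw.fin] with x hx
    exact ENNReal.rpow_ne_top_of_nonneg h0.le hx
  le x := by
    refine maxFn_le fun z r hx => ?_
    have hr := pos_of_mem hx
    have hol := ENNReal.lintegral_mul_norm_pow_le (μ := μ.restrict (ball z r))
      hw.meas.aemeasurable (measurable_const (a := (1 : ℝ≥0∞))).aemeasurable h0.le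
      (sub_nonneg.2 h1.le) (add_sub_cancel θ 1)
    simp only [ENNReal.one_rpow, mul_one, lintegral_one, Measure.restrict_apply_univ] at hol
    calc (μ (ball z r))⁻¹ * ∫⁻ y in ball z r, w y ^ θ ∂μ
        ≤ (μ (ball z r))⁻¹ * ((∫⁻ y in ball z r, w y ∂μ) ^ θ * μ (ball z r) ^ (1 - θ)) := by
          gcongr
      _ = ((μ (ball z r))⁻¹ * ∫⁻ y in ball z r, w y ∂μ) ^ θ := by
          rw [ENNReal.mul_rpow_of_nonneg _ _ h0.le, ENNReal.inv_rpow, ← ENNReal.rpow_neg,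
            ← ENNReal.rpow_neg_one, mul_left_comm,
            ← ENNReal.rpow_add _ _ (hμ.pos z r hr) (hμ.fin z r), mul_comm]
          congr 2; ring
      _ ≤ (A * w x) ^ θ := by
          gcongr ?_ ^ θ
          exact (le_maxFn hx).trans (hw.le x)
      _ = _ := ENNReal.mul_rpow_of_nonneg _ _ h0.le

theorem maxFn_pos {μ : Measure M} {K : ℝ≥0∞} (hμ : Doubling μ K)
    {F : M → ℝ≥0∞} (hF : Measurable F)
    (h : ¬ F =ᵐ[μ] 0) (x : M) : maxFn μ F x ≠ 0 := by
  intro h0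
  apply h
  have : ∀ n : ℕ, F =ᵐ[μ.restrict (ball x n)] 0 := by
    intro n
    rcases Nat.eq_zero_or_pos n with rfl | hn
    · simp [Filter.EventuallyEq]
    have hx : x ∈ ball x (n : ℝ) := mem_ball_self (by exact_mod_cast hn)
    have h1 := le_maxFn (ν := μ) (f := F) hx
    rw [h0, nonpos_iff_eq_zero, mul_eq_zero, ENNReal.inv_eq_zero] at h1
    exact (lintegral_eq_zero_iff hF).1 (h1.resolve_left (hμ.fin _ _))
  have := (ae_restrict_iUnion_iff (μ := μ) (fun n : ℕ => ball x (n : ℝ)) (fun y => F y = 0)).2 this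
  rwa [iUnion_ball_nat, Measure.restrict_univ] at this

section weights

variable [BorelSpace M] {μ : Measure M} {K A : ℝ≥0∞} {w : M → ℝ≥0∞}

/-- The form in which the `A₁` condition is used: on a ball, the average of `w` is at most `A` times
any value of `w`. -/
theorem A1.avg (hμ : Doubling μ K) (hw : A1 μ w A) {x z : M} {r : ℝ} (hx : x ∈ ball z r) :
    μ.withDensity w (ball z r) ≤ A * w x * μ (ball z r) := by
  have h := (le_maxFn hx).trans (hw.le x)
  rw [withDensity_apply _ measurableSet_ball]
  rwa [mul_comm _ (lintegral _ _), ← div_eq_mul_inv,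
    ENNReal.div_le_iff (hμ.pos _ _ (pos_of_mem hx)) (hμ.fin _ _)] at h

theorem A1.doubling (hμ : Doubling μ K) (hA : A ≠ ∞) (hw : A1 μ w A) :
    Doubling (μ.withDensity w) (A * K) where
  pos x r hr := by
    rw [withDensity_apply _ measurableSet_ball]
    intro h0
    rw [lintegral_eq_zero_iff hw.meas] at h0
    have : μ.restrict (ball x r) ≠ 0 := by
      simpa using hμ.pos x r hr
    have := ae_neBot.2 this
    obtain ⟨y, hy⟩ := h0.exists
    exact hw.pos y hy
  fin x r := by
    rcases le_or_gt r 0 with hr | hr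
    · simp [ball_eq_empty.2 hr]
    obtain ⟨y, hy, hwy⟩ := ((frequently_ae_mem_iff.2 (hμ.pos x r hr)).and_eventually hw.fin).exists
    exact ne_top_of_le_ne_top
      (ENNReal.mul_ne_top (ENNReal.mul_ne_top hA hwy) (hμ.fin x r)) (hw.avg hμ hy)
  dbl x r hr := by
    have h1 : ∀ y ∈ ball x r, μ.withDensity w (ball x (2 * r)) ≤ (A * K * μ (ball x r)) * w y := by
      intro y hy
      calc μ.withDensity w (ball x (2 * r)) ≤ A * w y * μ (ball x (2 * r)) :=
            hw.avg hμ (ball_subset_ball (by linarith) hy)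
        _ ≤ A * w y * (K * μ (ball x r)) := by gcongr; exact hμ.dbl x r hr
        _ = _ := by ring
    have h2 := setLIntegral_mono' (μ := μ) measurableSet_ball h1
    rw [lintegral_const_mul _ hw.meas, setLIntegral_const, ← withDensity_apply _ measurableSet_ball,
      mul_right_comm] at h2
    exact (ENNReal.mul_le_mul_iff_left (hμ.pos x r hr) (hμ.fin x r)).1 h2

theorem average_compare {b c X Y D : ℝ≥0∞} (hb : b ≠ 0) (hb' : b ≠ ∞) (hc : c ≠ 0) (hc' : c ≠ ∞)
    (h : b * X ≤ D * c * Y) : c⁻¹ * X ≤ D * (b⁻¹ * Y) := by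
  calc c⁻¹ * X = c⁻¹ * b⁻¹ * (b * X) := by
        rw [← mul_assoc, mul_assoc c⁻¹, ENNReal.inv_mul_cancel hb hb', mul_one]
    _ ≤ c⁻¹ * b⁻¹ * (D * c * Y) := by gcongr
    _ = (c⁻¹ * c) * (D * (b⁻¹ * Y)) := by ring
    _ = _ := by rw [ENNReal.inv_mul_cancel hc hc', one_mul]

/-- For an `A₁` weight, the maximal function of `μ` is dominated by that of `w dμ`. -/
theorem A1.maxFn_le_weighted (hμ : Doubling μ K) (hA : A ≠ ∞) (hw : A1 μ w A) {f : M → ℝ≥0∞}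
    (hf : Measurable f) (x : M) : maxFn μ f x ≤ A * maxFn (μ.withDensity w) f x := by
  have hν := hw.doubling hμ hA
  refine maxFn_le fun z r hx => ?_
  have hr := pos_of_mem hx
  refine le_trans ?_ (mul_le_mul_right (le_maxFn hx) A)
  refine average_compare (hν.pos z r hr) (hν.fin z r) (hμ.pos z r hr) (hμ.fin z r) ?_
  rw [← lintegral_const_mul _ hf,
    setLIntegral_withDensity_eq_setLIntegral_mul μ hw.meas hf measurableSet_ball,
    ← lintegral_const_mul _ (hw.meas.mul hf)]
  refine setLIntegral_mono' measurableSet_ball fun y hy => ?_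
  calc μ.withDensity w (ball z r) * f y ≤ A * w y * μ (ball z r) * f y := by
        gcongr; exact hw.avg hμ hy
    _ = _ := by simp only [Pi.mul_apply]; ring

/-- Pointwise domination used for the dual weight: write `f dμ = (f / w) w dμ` and bound the average
of `w` over the ball by its value at `x`. -/
theorem A1.maxFn_le_dual (hμ : Doubling μ K) (hA : A ≠ ∞) (hw : A1 μ w A) {f : M → ℝ≥0∞}
    (hf : Measurable f) (x : M) :
    maxFn μ f x ≤ A * w x * maxFn (μ.withDensity w) (fun y => f y * (w y)⁻¹) x := by
  have hν := hw.doubling hμ hA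
  refine maxFn_le fun z r hx => ?_
  have hr := pos_of_mem hx
  refine le_trans ?_ (mul_le_mul_right (le_maxFn hx) _)
  refine average_compare (hν.pos z r hr) (hν.fin z r) (hμ.pos z r hr) (hμ.fin z r) ?_
  have e : ∫⁻ y in ball z r, f y * (w y)⁻¹ ∂μ.withDensity w = ∫⁻ y in ball z r, f y ∂μ := by
    rw [setLIntegral_withDensity_eq_setLIntegral_mul μ hw.meas (g := fun y => f y * (w y)⁻¹)
      (hf.mul hw.meas.inv) measurableSet_ball]
    refine lintegral_congr_ae (ae_restrict_of_ae ?_)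
    filter_upwards [hw.fin] with y hy
    simp only [Pi.mul_apply]
    rw [mul_left_comm, ENNReal.mul_inv_cancel (hw.pos y) hy, mul_one]
  rw [e]
  gcongr
  exact hw.avg hμ hx

/-- The constant in the weighted bounds: `w dμ` is doubling with constant `A * K`, and the pointwise
domination by its maximal function costs a factor `A`. -/
noncomputable def weightConst (q : ℝ) (A K : ℝ≥0∞) : ℝ≥0∞ := A ^ q * strongConst q (A * K)

theorem weightConst_ne_top {q : ℝ} (hq : 1 < q) (hA : A ≠ ∞) (hK : K ≠ ∞) :
    weightConst q A K ≠ ∞ :=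
  ENNReal.mul_ne_top (ENNReal.rpow_ne_top_of_nonneg (by linarith) hA)
    (strongConst_ne_top q (ENNReal.mul_ne_top hA hK))

/-- The maximal operator of `μ` is bounded on `L^q(w dμ)` for `w` an `A₁` weight. -/
theorem A1.weighted (hμ : Doubling μ K) (hA : A ≠ ∞) (hw : A1 μ w A) {q : ℝ} (hq : 1 < q)
    {f : M → ℝ≥0∞} (hf : Measurable f) :
    ∫⁻ x, maxFn μ f x ^ q * w x ∂μ ≤ weightConst q A K * ∫⁻ x, f x ^ q * w x ∂μ := by
  have hs := (hw.doubling hμ hA).strong hq hf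
  have hm := measurable_maxFn (μ.withDensity w) f
  rw [lintegral_withDensity_eq_lintegral_mul μ hw.meas (hm.pow_const q),
    lintegral_withDensity_eq_lintegral_mul μ hw.meas (hf.pow_const q)] at hs
  calc ∫⁻ x, maxFn μ f x ^ q * w x ∂μ
      ≤ ∫⁻ x, A ^ q * (w * fun x => maxFn (μ.withDensity w) f x ^ q) x ∂μ := by
        refine lintegral_mono fun x => ?_
        calc maxFn μ f x ^ q * w x ≤ (A * maxFn (μ.withDensity w) f x) ^ q * w x := by
              gcongr; exact hw.maxFn_le_weighted hμ hA hf x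
          _ = _ := by
              rw [ENNReal.mul_rpow_of_nonneg _ _ (by linarith)]
              simp only [Pi.mul_apply]; ring
    _ = A ^ q * ∫⁻ x, (w * fun x => maxFn (μ.withDensity w) f x ^ q) x ∂μ :=
        lintegral_const_mul _ (hw.meas.mul (hm.pow_const q))
    _ ≤ A ^ q * (strongConst q (A * K) * ∫⁻ x, (w * fun x => f x ^ q) x ∂μ) := by gcongr A ^ q * ?_
    _ = _ := by
        rw [weightConst, mul_assoc]
        simp only [Pi.mul_apply, mul_comm (w _)]

/-- The maximal operator of `μ` is bounded on `L^q(w ^ (1 - q) dμ)` for `w` an `A₁` weight. -/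
theorem A1.weighted_dual (hμ : Doubling μ K) (hA : A ≠ ∞) (hw : A1 μ w A) {q : ℝ} (hq : 1 < q)
    {f : M → ℝ≥0∞} (hf : Measurable f) :
    ∫⁻ x, maxFn μ f x ^ q * w x ^ (1 - q) ∂μ ≤
      weightConst q A K * ∫⁻ x, f x ^ q * w x ^ (1 - q) ∂μ := by
  set g : M → ℝ≥0∞ := fun y => f y * (w y)⁻¹ with hg
  have hgm : Measurable g := hf.mul hw.meas.inv
  have hs := (hw.doubling hμ hA).strong hq hgm
  have hm := measurable_maxFn (μ.withDensity w) g
  rw [lintegral_withDensity_eq_lintegral_mul μ hw.meas (hm.pow_const q),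
    lintegral_withDensity_eq_lintegral_mul μ hw.meas (hgm.pow_const q)] at hs
  have hpw : ∀ x, w x ≠ ∞ → w x ^ q * w x ^ (1 - q) = w x := by
    intro x hx
    rw [← ENNReal.rpow_add _ _ (hw.pos x) hx, add_sub_cancel, ENNReal.rpow_one]
  calc ∫⁻ x, maxFn μ f x ^ q * w x ^ (1 - q) ∂μ
      ≤ ∫⁻ x, A ^ q * (w * fun x => maxFn (μ.withDensity w) g x ^ q) x ∂μ := by
        refine lintegral_mono_ae ?_
        filter_upwards [hw.fin] with x hx
        calc maxFn μ f x ^ q * w x ^ (1 - q)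
            ≤ (A * w x * maxFn (μ.withDensity w) g x) ^ q * w x ^ (1 - q) := by
              gcongr; exact hw.maxFn_le_dual hμ hA hf x
          _ = A ^ q * ((w x ^ q * w x ^ (1 - q)) * maxFn (μ.withDensity w) g x ^ q) := by
              rw [ENNReal.mul_rpow_of_nonneg _ _ (by linarith),
                ENNReal.mul_rpow_of_nonneg _ _ (by linarith)]
              ring
          _ = _ := by rw [hpw x hx]; rfl
    _ = A ^ q * ∫⁻ x, (w * fun x => maxFn (μ.withDensity w) g x ^ q) x ∂μ :=
        lintegral_const_mul _ (hw.meas.mul (hm.pow_const q))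
    _ ≤ A ^ q * (strongConst q (A * K) * ∫⁻ x, (w * fun x => g x ^ q) x ∂μ) := by gcongr A ^ q * ?_
    _ = _ := by
        rw [weightConst, mul_assoc]
        congr 2
        refine lintegral_congr_ae ?_
        filter_upwards [hw.fin] with x hx
        simp only [Pi.mul_apply, hg]
        nth_rewrite 1 [← hpw x hx]
        rw [ENNReal.mul_rpow_of_nonneg _ _ (by linarith), ENNReal.inv_rpow]
        have h1 : w x ^ q ≠ 0 := by simp [ENNReal.rpow_eq_zero_iff, hw.pos x, hx]
        have h2 : w x ^ q ≠ ∞ := ENNReal.rpow_ne_top_of_nonneg (by linarith) hx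
        calc _ = (w x ^ q * (w x ^ q)⁻¹) * (f x ^ q * w x ^ (1 - q)) := by ring
          _ = _ := by rw [ENNReal.mul_inv_cancel h1 h2, one_mul]

/-- The Rubio de Francia algorithm: `w = ∑ₖ cᵏ 𝓜ᵏF` is an `A₁` majorant of a nonzero `F` in `L^s`, with
comparable `L^s` norm, the constants being independent of `F`. -/
theorem rubioDeFrancia (hμ : Doubling μ K) (hK : K ≠ ∞) {s : ℝ} (hs : 1 < s) :
    ∃ A D : ℝ≥0∞, A ≠ ∞ ∧ D ≠ ∞ ∧ ∀ F : M → ℝ≥0∞, Measurable F →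
      ∫⁻ x, F x ^ s ∂μ ≠ 0 → ∫⁻ x, F x ^ s ∂μ ≠ ∞ →
      ∃ w, A1 μ w A ∧ (∀ x, F x ≤ w x) ∧ ∫⁻ x, w x ^ s ∂μ ≤ D * ∫⁻ x, F x ^ s ∂μ := by
  have hs0 : 0 < s := by linarith
  set C := strongConst s K with hC
  have hCt : C ≠ ∞ := strongConst_ne_top s hK
  set N : ℝ≥0∞ := (C + 1) ^ (1 / s) with hN
  have hNt : N ≠ ∞ := ENNReal.rpow_ne_top_of_nonneg (by positivity) (by simp [hCt])
  have hN0 : N ≠ 0 := by simp [hN, ENNReal.rpow_eq_zero_iff, hs0.le]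
  have hNs : N ^ s = C + 1 := by
    rw [hN, ← ENNReal.rpow_mul, one_div_mul_cancel hs0.ne', ENNReal.rpow_one]
  have he : (2⁻¹ * N⁻¹) ^ s * C ≤ 2⁻¹ := by
    rw [ENNReal.mul_rpow_of_nonneg _ _ hs0.le, ENNReal.inv_rpow N, hNs, mul_assoc]
    calc (2⁻¹ : ℝ≥0∞) ^ s * ((C + 1)⁻¹ * C) ≤ (2⁻¹ : ℝ≥0∞) ^ (1 : ℝ) * ((C + 1)⁻¹ * (C + 1)) := by
          gcongr ?_ * (_ * ?_)
          · exact ENNReal.rpow_le_rpow_of_exponent_ge (by simp) hs.le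
          · exact le_self_add
      _ = _ := by rw [ENNReal.inv_mul_cancel (by simp) (by simp [hCt]), ENNReal.rpow_one, mul_one]
  -- one factor `1/2` makes the sum comparable to a supremum, the other makes the integrals of the
  -- `s`-th powers of the terms summable
  set c : ℝ≥0∞ := 2⁻¹ * (2⁻¹ * N⁻¹) with hc
  have hc0 : c ≠ 0 := by simp [hc, hNt]
  have hct : c ≠ ∞ := by simp [hc, hN0, ENNReal.mul_eq_top]
  refine ⟨c⁻¹, 2 ^ s * 2, by simp [hc0], ENNReal.mul_ne_top
    (ENNReal.rpow_ne_top_of_nonneg hs0.le (by simp)) (by simp), fun F hF hF0 hFt => ?_⟩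
  let I : ℕ → M → ℝ≥0∞ := fun k => (maxFn μ)^[k] F
  have hI0 : I 0 = F := rfl
  have hIs : ∀ k, I (k + 1) = maxFn μ (I k) := fun k => Function.iterate_succ_apply' _ _ _
  have hIm : ∀ k, Measurable (I k) := by
    intro k
    cases k with
    | zero => exact hF
    | succ k => rw [hIs]; exact measurable_maxFn _ _
  have hIn : ∀ k, ∫⁻ x, I k x ^ s ∂μ ≤ C ^ k * ∫⁻ x, F x ^ s ∂μ := by
    intro k
    induction k with
    | zero => simp [hI0]
    | succ k ih =>
      rw [hIs, pow_succ', mul_assoc]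
      exact (hμ.strong hs (hIm k)).trans (by gcongr C * ?_)
  let w : M → ℝ≥0∞ := fun x => ∑' k, c ^ k * I k x
  have hwm : Measurable w := Measurable.tsum fun k => (hIm k).const_mul _
  have hFw : ∀ x, F x ≤ w x := by
    intro x
    have := ENNReal.le_tsum (f := fun k => c ^ k * I k x) 0
    simpa [hI0] using this
  have hMw : ∀ x, maxFn μ w x ≤ c⁻¹ * w x := by
    intro x
    calc maxFn μ w x ≤ ∑' k, c ^ k * maxFn μ (I k) x := maxFn_tsum_le _ hIm x
      _ = ∑' k, c⁻¹ * (c ^ (k + 1) * I (k + 1) x) := by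
          refine tsum_congr fun k => ?_
          rw [hIs, pow_succ', ← mul_assoc, ← mul_assoc, ENNReal.inv_mul_cancel hc0 hct, one_mul]
      _ = c⁻¹ * ∑' k, c ^ (k + 1) * I (k + 1) x := ENNReal.tsum_mul_left
      _ ≤ c⁻¹ * w x := by
          gcongr c⁻¹ * ?_
          exact ENNReal.tsum_comp_le_tsum_of_injective (add_left_injective 1)
            (fun k => c ^ k * I k x)
  have hws : ∫⁻ x, w x ^ s ∂μ ≤ 2 ^ s * 2 * ∫⁻ x, F x ^ s ∂μ := by
    have hpt : ∀ x, w x ^ s ≤ 2 ^ s * ∑' k, ((2⁻¹ * N⁻¹) ^ s) ^ k * I k x ^ s := by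
      intro x
      set S := ∑' k, ((2⁻¹ * N⁻¹) ^ s) ^ k * I k x ^ s with hS
      have hk : ∀ k, (2⁻¹ * N⁻¹) ^ k * I k x ≤ S ^ (1 / s) := by
        intro k
        rw [one_div, ENNReal.le_rpow_inv_iff hs0, ENNReal.mul_rpow_of_nonneg _ _ hs0.le]
        refine le_trans (le_of_eq ?_) (ENNReal.le_tsum k)
        rw [← ENNReal.rpow_natCast, ← ENNReal.rpow_mul, mul_comm (k : ℝ), ENNReal.rpow_mul,
          ENNReal.rpow_natCast]
      have : w x ≤ 2 * S ^ (1 / s) := by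
        calc w x = ∑' k, (2⁻¹ : ℝ≥0∞) ^ k * ((2⁻¹ * N⁻¹) ^ k * I k x) := by
              refine tsum_congr fun k => ?_
              rw [hc, mul_pow 2⁻¹ (2⁻¹ * N⁻¹), mul_assoc]
          _ ≤ ∑' k, (2⁻¹ : ℝ≥0∞) ^ k * S ^ (1 / s) :=
              ENNReal.tsum_le_tsum fun k => by gcongr; exact hk k
          _ = _ := by
              rw [ENNReal.tsum_mul_right, ENNReal.tsum_geometric, ENNReal.one_sub_inv_two, inv_inv]
      calc w x ^ s ≤ (2 * S ^ (1 / s)) ^ s := by gcongr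
        _ = _ := by
            rw [ENNReal.mul_rpow_of_nonneg _ _ hs0.le, ← ENNReal.rpow_mul,
              one_div_mul_cancel hs0.ne', ENNReal.rpow_one]
    calc ∫⁻ x, w x ^ s ∂μ
        ≤ ∫⁻ x, 2 ^ s * ∑' k, ((2⁻¹ * N⁻¹) ^ s) ^ k * I k x ^ s ∂μ := lintegral_mono hpt
      _ = 2 ^ s * ∑' k, ((2⁻¹ * N⁻¹) ^ s) ^ k * ∫⁻ x, I k x ^ s ∂μ := by
          rw [lintegral_const_mul _ (Measurable.tsum fun k =>
            ((hIm k).pow_const s).const_mul _), lintegral_tsum fun k =>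
            (((hIm k).pow_const s).const_mul _).aemeasurable]
          congr 2
          ext k
          rw [lintegral_const_mul _ ((hIm k).pow_const s)]
      _ ≤ 2 ^ s * ∑' k, (2⁻¹ : ℝ≥0∞) ^ k * ∫⁻ x, F x ^ s ∂μ := by
          gcongr 2 ^ s * ?_
          refine ENNReal.tsum_le_tsum fun k => ?_
          calc ((2⁻¹ * N⁻¹) ^ s) ^ k * ∫⁻ x, I k x ^ s ∂μ
              ≤ ((2⁻¹ * N⁻¹) ^ s) ^ k * (C ^ k * ∫⁻ x, F x ^ s ∂μ) := by
                gcongr ((2⁻¹ * N⁻¹) ^ s) ^ k * ?_; exact hIn k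
            _ = ((2⁻¹ * N⁻¹) ^ s * C) ^ k * ∫⁻ x, F x ^ s ∂μ := by rw [mul_pow, mul_assoc]
            _ ≤ _ := by gcongr
      _ = _ := by
          rw [ENNReal.tsum_mul_right, ENNReal.tsum_geometric, ENNReal.one_sub_inv_two, inv_inv,
            mul_assoc]
  refine ⟨w, ⟨hwm, fun x h0 => ?_, ?_, hMw⟩, hFw, hws⟩
  · have hF' : ¬ F =ᵐ[μ] 0 := by
      intro h
      apply hF0
      rw [lintegral_eq_zero_iff (hF.pow_const s)]
      filter_upwards [h] with y hy
      simp [hy, hs0]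
    refine maxFn_pos hμ hF hF' x (le_antisymm ?_ zero_le)
    calc maxFn μ F x ≤ maxFn μ w x := maxFn_mono hFw x
      _ ≤ c⁻¹ * w x := hMw x
      _ = 0 := by rw [h0, mul_zero]
  · have : ∫⁻ x, w x ^ s ∂μ ≠ ∞ := ne_top_of_le_ne_top (ENNReal.mul_ne_top (ENNReal.mul_ne_top
      (ENNReal.rpow_ne_top_of_nonneg hs0.le (by simp)) (by simp)) hFt) hws
    filter_upwards [ae_lt_top (hwm.pow_const s) this] with x hx h
    simp [h, hs0] at hx

end weights

/-! ### Vector-valued bounds -/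

section vector

variable [BorelSpace M] {μ : Measure M} {K : ℝ≥0∞}

/-- A weighted `L^q` bound for the maximal operator extends to `ℓ^q`-valued functions. -/
theorem tsum_weighted {q : ℝ} {C : ℝ≥0∞} {v : M → ℝ≥0∞} (hv : Measurable v)
    (H : ∀ f : M → ℝ≥0∞, Measurable f →
      ∫⁻ x, maxFn μ f x ^ q * v x ∂μ ≤ C * ∫⁻ x, f x ^ q * v x ∂μ)
    {g : ℕ → M → ℝ≥0∞} (hg : ∀ j, Measurable (g j)) :
    ∫⁻ x, (∑' j, maxFn μ (g j) x ^ q) * v x ∂μ ≤ C * ∫⁻ x, (∑' j, g j x ^ q) * v x ∂μ := by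
  simp only [← ENNReal.tsum_mul_right]
  have h1 : ∀ j, Measurable fun x => maxFn μ (g j) x ^ q * v x := fun j =>
    ((measurable_maxFn μ (g j)).pow_const q).mul hv
  have h2 : ∀ j, Measurable fun x => g j x ^ q * v x := fun j => ((hg j).pow_const q).mul hv
  rw [lintegral_tsum fun j => (h1 j).aemeasurable, lintegral_tsum fun j => (h2 j).aemeasurable,
    ← ENNReal.tsum_mul_left]
  exact ENNReal.tsum_le_tsum fun j => H _ (hg j)

/-- The case `p = q`, where the scalar maximal theorem can be summed over `j`. -/
theorem vector_eq (hμ : Doubling μ K) {q : ℝ} (hq : 1 < q)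
    {g : ℕ → M → ℝ≥0∞} (hg : ∀ j, Measurable (g j)) :
    ∫⁻ x, (∑' j, maxFn μ (g j) x ^ q) ∂μ ≤ strongConst q K * ∫⁻ x, (∑' j, g j x ^ q) ∂μ := by
  have := tsum_weighted (μ := μ) (q := q) (C := strongConst q K) (v := fun _ => 1)
    measurable_const (fun f hf => by simpa using hμ.strong hq hf) hg
  simpa using this

/-- The case `p < q`. With `w` an `A₁` majorant of `(∑ g_j ^ q) ^ (1/q)` in `L^p`, the weight
`w ^ (p - q)` is `(w ^ θ) ^ (1 - q)` for `θ = (q - p) / (q - 1) < 1`, so `A1.weighted_dual` applies;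
Hölder's inequality removes the weight. -/
theorem vector_lt (hμ : Doubling μ K) (hK : K ≠ ∞) {p q : ℝ} (hp : 1 < p) (hpq : p < q) :
    ∃ C : ℝ≥0∞, C ≠ ∞ ∧ ∀ g : ℕ → M → ℝ≥0∞, (∀ j, Measurable (g j)) →
      ∫⁻ x, (∑' j, maxFn μ (g j) x ^ q) ^ (p / q) ∂μ ≤
        C * ∫⁻ x, (∑' j, g j x ^ q) ^ (p / q) ∂μ := by
  have hq : 1 < q := hp.trans hpq
  have hp0 : 0 < p := by linarith
  have hq0 : 0 < q := by linarith
  obtain ⟨A, D, hA, hD, H⟩ := rubioDeFrancia hμ hK hp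
  set θ := (q - p) / (q - 1) with hθ
  have hθ0 : 0 < θ := div_pos (by linarith) (by linarith)
  have hθ1 : θ < 1 := (div_lt_one (by linarith)).2 (by linarith)
  have hAθ : A ^ θ ≠ ∞ := ENNReal.rpow_ne_top_of_nonneg hθ0.le hA
  set W := weightConst q (A ^ θ) K
  have hW : W ≠ ∞ := weightConst_ne_top hq hAθ hK
  have hr0 : 0 < p / q := by positivity
  have hr1 : 0 < 1 - p / q := by
    rw [sub_pos, div_lt_one hq0]; exact hpq
  refine ⟨W ^ (p / q) * D ^ (1 - p / q) + 1, by
    simp [ENNReal.mul_eq_top, ENNReal.rpow_eq_top_iff, hW, hD, hr0.not_gt,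
      hr1.not_gt], fun g hg => ?_⟩
  set 𝒢 : M → ℝ≥0∞ := fun x => ∑' j, maxFn μ (g j) x ^ q with h𝒢
  set ℱ : M → ℝ≥0∞ := fun x => ∑' j, g j x ^ q with hℱ
  have h𝒢m : Measurable 𝒢 := Measurable.tsum fun j => (measurable_maxFn μ (g j)).pow_const q
  have hℱm : Measurable ℱ := Measurable.tsum fun j => (hg j).pow_const q
  change ∫⁻ x, 𝒢 x ^ (p / q) ∂μ ≤ _ * ∫⁻ x, ℱ x ^ (p / q) ∂μ
  have hF : ∀ x, (ℱ x ^ (1 / q)) ^ p = ℱ x ^ (p / q) := by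
    intro x
    rw [← ENNReal.rpow_mul, one_div_mul_eq_div]
  by_cases h0 : ∫⁻ x, ℱ x ^ (p / q) ∂μ = 0
  · -- then all `g j` vanish almost everywhere, and so do their maximal functions
    have hℱ0 : ∫⁻ x, ℱ x ∂μ = 0 := by
      rw [lintegral_eq_zero_iff (hℱm.pow_const _)] at h0
      rw [lintegral_eq_zero_iff hℱm]
      filter_upwards [h0] with x hx
      simpa [ENNReal.rpow_eq_zero_iff, hr0, hr0.not_gt] using hx
    have h𝒢0 : ∫⁻ x, 𝒢 x ∂μ = 0 := by
      have := vector_eq hμ hq hg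
      change ∫⁻ x, 𝒢 x ∂μ ≤ _ * ∫⁻ x, ℱ x ∂μ at this
      rwa [hℱ0, mul_zero, nonpos_iff_eq_zero] at this
    refine le_of_eq_of_le ?_ zero_le
    rw [lintegral_eq_zero_iff h𝒢m] at h𝒢0
    rw [lintegral_eq_zero_iff (h𝒢m.pow_const _)]
    filter_upwards [h𝒢0] with x hx
    have hx : 𝒢 x = 0 := hx
    simp [hx, hr0]
  by_cases ht : ∫⁻ x, ℱ x ^ (p / q) ∂μ = ∞
  · rw [ht, ENNReal.mul_top (by simp)]; exact le_top
  obtain ⟨w, hw, hFw, hwp⟩ := H (fun x => ℱ x ^ (1 / q)) (hℱm.pow_const _)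
    (by simpa only [hF] using h0) (by simpa only [hF] using ht)
  simp only [hF] at hwp
  have hwθ := hw.rpow hμ hθ0 hθ1
  have key : ∫⁻ x, 𝒢 x * w x ^ (p - q) ∂μ ≤ W * ∫⁻ x, ℱ x * w x ^ (p - q) ∂μ := by
    have hexp : ∀ x, (w x ^ θ) ^ (1 - q) = w x ^ (p - q) := by
      intro x
      rw [← ENNReal.rpow_mul]
      congr 1
      rw [hθ, div_mul_eq_mul_div, div_eq_iff (by linarith)]
      ring
    refine tsum_weighted (hw.meas.pow_const _) (fun f hf => ?_) hg
    simpa only [hexp] using hwθ.weighted_dual hμ hAθ hq hf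
  -- since `p - q < 0`, the majorant property `ℱ ^ (1/q) ≤ w` bounds `w ^ (p - q)` from above
  have hR : ∫⁻ x, ℱ x * w x ^ (p - q) ∂μ ≤ ∫⁻ x, ℱ x ^ (p / q) ∂μ := by
    refine lintegral_mono_ae ?_
    filter_upwards [hw.fin] with x hx
    rcases eq_or_ne (ℱ x) 0 with hz | hz
    · simp [hz]
    have hfx : ℱ x ≠ ∞ := by
      intro h
      have := hFw x
      rw [h, ENNReal.top_rpow_of_pos (by positivity)] at this
      exact hx (top_le_iff.1 this)
    calc ℱ x * w x ^ (p - q) ≤ ℱ x * (ℱ x ^ (1 / q)) ^ (p - q) := by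
          gcongr ℱ x * ?_
          rw [← neg_sub q p, ENNReal.rpow_neg, ENNReal.rpow_neg, ENNReal.inv_le_inv]
          exact ENNReal.rpow_le_rpow (hFw x) (by linarith)
      _ = ℱ x ^ (p / q) := by
          nth_rewrite 1 [← ENNReal.rpow_one (ℱ x)]
          rw [← ENNReal.rpow_mul, ← ENNReal.rpow_add _ _ hz hfx]
          congr 1
          field_simp
          ring
  have hol := ENNReal.lintegral_mul_norm_pow_le (μ := μ)
    (h𝒢m.mul (hw.meas.pow_const (p - q))).aemeasurable (hw.meas.pow_const p).aemeasurable
    hr0.le hr1.le (by ring)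
  calc ∫⁻ x, 𝒢 x ^ (p / q) ∂μ
      = ∫⁻ x, (𝒢 * fun x => w x ^ (p - q)) x ^ (p / q) * (w x ^ p) ^ (1 - p / q) ∂μ := by
        refine lintegral_congr_ae ?_
        filter_upwards [hw.fin] with x hx
        simp only [Pi.mul_apply]
        rw [ENNReal.mul_rpow_of_nonneg _ _ hr0.le, ← ENNReal.rpow_mul, ← ENNReal.rpow_mul,
          mul_assoc, ← ENNReal.rpow_add _ _ (hw.pos x) hx]
        have : (p - q) * (p / q) + p * (1 - p / q) = 0 := by field_simp; ring
        rw [this, ENNReal.rpow_zero, mul_one]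
    _ ≤ (∫⁻ x, 𝒢 x * w x ^ (p - q) ∂μ) ^ (p / q) * (∫⁻ x, w x ^ p ∂μ) ^ (1 - p / q) := hol
    _ ≤ (W * ∫⁻ x, ℱ x ^ (p / q) ∂μ) ^ (p / q) *
          (D * ∫⁻ x, ℱ x ^ (p / q) ∂μ) ^ (1 - p / q) := by
        gcongr ?_ ^ (p / q) * ?_ ^ (1 - p / q)
        exact key.trans (by gcongr W * ?_)
    _ = W ^ (p / q) * D ^ (1 - p / q) * ∫⁻ x, ℱ x ^ (p / q) ∂μ := by
        rw [ENNReal.mul_rpow_of_nonneg _ _ hr0.le, ENNReal.mul_rpow_of_nonneg _ _ hr1.le]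
        set X := ∫⁻ x, ℱ x ^ (p / q) ∂μ
        have : X ^ (p / q) * X ^ (1 - p / q) = X := by
          rw [← ENNReal.rpow_add _ _ h0 ht, add_sub_cancel, ENNReal.rpow_one]
        nth_rewrite 3 [← this]
        ring
    _ ≤ _ := by gcongr; exact le_self_add

/-- The case `q < p`. With `r = p / q`, the function `𝒢 = ∑ (𝓜g_j) ^ q` is tested against an `A₁`
majorant of `𝒢 ^ (r - 1)` in the dual space of `L^r`, and `A1.weighted` applies. Truncating `𝒢` makes
its `L^r` norm finite, so that it can be divided out. -/
theorem vector_gt (hμ : Doubling μ K) (hK : K ≠ ∞) {p q : ℝ} (hq : 1 < q) (hpq : q < p) :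
    ∃ C : ℝ≥0∞, C ≠ ∞ ∧ ∀ g : ℕ → M → ℝ≥0∞, (∀ j, Measurable (g j)) →
      ∫⁻ x, (∑' j, maxFn μ (g j) x ^ q) ^ (p / q) ∂μ ≤
        C * ∫⁻ x, (∑' j, g j x ^ q) ^ (p / q) ∂μ := by
  have hq0 : 0 < q := by linarith
  set r := p / q with hr
  have hr1 : 1 < r := (one_lt_div hq0).2 hpq
  have hr0 : 0 < r := by linarith
  have hconj := Real.HolderConjugate.conjExponent hr1
  set s := r.conjExponent with hs
  have hs1 : 1 < s := hconj.symm.lt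
  have hs0 : 0 < s := by linarith
  have hrs : (r - 1) * s = r := by
    have := hconj.sub_one_mul_conj
    linarith
  obtain ⟨A, D, hA, hD, H⟩ := rubioDeFrancia hμ hK hs1
  set W := weightConst q A K
  have hW : W ≠ ∞ := weightConst_ne_top hq hA hK
  refine ⟨(W * D ^ (1 / s)) ^ r, ENNReal.rpow_ne_top_of_nonneg hr0.le (ENNReal.mul_ne_top hW
    (ENNReal.rpow_ne_top_of_nonneg (by positivity) hD)), fun g hg => ?_⟩
  rcases isEmpty_or_nonempty M with hM | ⟨⟨x₀⟩⟩
  · simp [Measure.eq_zero_of_isEmpty μ]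
  set 𝒢 : M → ℝ≥0∞ := fun x => ∑' j, maxFn μ (g j) x ^ q with h𝒢
  set ℱ : M → ℝ≥0∞ := fun x => ∑' j, g j x ^ q with hℱ
  have h𝒢m : Measurable 𝒢 := Measurable.tsum fun j => (measurable_maxFn μ (g j)).pow_const q
  have hℱm : Measurable ℱ := Measurable.tsum fun j => (hg j).pow_const q
  change ∫⁻ x, 𝒢 x ^ r ∂μ ≤ _ * ∫⁻ x, ℱ x ^ r ∂μ
  -- truncation of `𝒢` in height and in space, so that its `r`-th power is integrable
  let u : ℕ → M → ℝ≥0∞ := fun n => (ball x₀ (n : ℝ)).indicator fun x => min (𝒢 x) n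
  have hum : ∀ n, Measurable (u n) := fun n =>
    (h𝒢m.min measurable_const).indicator measurableSet_ball
  have hu𝒢 : ∀ n x, u n x ≤ 𝒢 x := fun n x =>
    (Set.indicator_le_self' (fun _ _ => zero_le) x).trans (min_le_left _ _)
  have hmono : Monotone fun n x => u n x ^ r := by
    intro m n hmn x
    have hmn' : (m : ℝ) ≤ n := by exact_mod_cast hmn
    refine ENNReal.rpow_le_rpow ?_ hr0.le
    by_cases hx : x ∈ ball x₀ (m : ℝ)
    · have hx' : x ∈ ball x₀ (n : ℝ) := ball_subset_ball hmn' hx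
      simp only [u, Set.indicator_of_mem hx, Set.indicator_of_mem hx']
      gcongr
    · simp [u, Set.indicator_of_notMem hx]
  have hsup : ∀ x, ⨆ n, u n x ^ r = 𝒢 x ^ r := by
    intro x
    refine le_antisymm (iSup_le fun n => ENNReal.rpow_le_rpow (hu𝒢 n x) hr0.le) ?_
    obtain ⟨m, hm⟩ := exists_nat_gt (dist x x₀)
    refine le_of_tendsto (f := fun n : ℕ => min (𝒢 x) (n : ℝ≥0∞) ^ r)
      (x := Filter.atTop) ?_ ?_
    · refine (ENNReal.continuous_rpow_const.tendsto _).comp ?_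
      have := (tendsto_const_nhds (x := 𝒢 x)).min ENNReal.tendsto_nat_nhds_top
      simpa using this
    · filter_upwards [Filter.eventually_ge_atTop m] with n hn
      have hx : x ∈ ball x₀ (n : ℝ) := hm.trans_le (by exact_mod_cast hn)
      refine le_iSup_of_le n ?_
      simp [u, Set.indicator_of_mem hx]
  have hfin : ∀ n, ∫⁻ x, u n x ^ r ∂μ ≠ ∞ := by
    intro n
    have : ∫⁻ x, u n x ^ r ∂μ ≤ ∫⁻ x, (ball x₀ (n : ℝ)).indicator (fun _ => (n : ℝ≥0∞) ^ r) x ∂μ := by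
      refine lintegral_mono fun x => ?_
      by_cases hx : x ∈ ball x₀ (n : ℝ)
      · simp only [u, Set.indicator_of_mem hx]
        gcongr
        exact min_le_right _ _
      · simp [u, Set.indicator_of_notMem hx, hr0]
    rw [lintegral_indicator_const measurableSet_ball] at this
    exact ne_top_of_le_ne_top (ENNReal.mul_ne_top
      (ENNReal.rpow_ne_top_of_nonneg hr0.le (by simp)) (hμ.fin _ _)) this
  have hbound : ∀ n, ∫⁻ x, u n x ^ r ∂μ ≤ (W * D ^ (1 / s)) ^ r * ∫⁻ x, ℱ x ^ r ∂μ := by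
    intro n
    set X := ∫⁻ x, u n x ^ r ∂μ with hX
    by_cases h0 : X = 0
    · rw [h0]; exact zero_le
    have hh : ∀ x, (u n x ^ (r - 1)) ^ s = u n x ^ r := by
      intro x
      rw [← ENNReal.rpow_mul, hrs]
    obtain ⟨w, hw, hFw, hws⟩ := H (fun x => u n x ^ (r - 1)) ((hum n).pow_const _)
      (by simpa only [hh] using h0) (by simpa only [hh] using hfin n)
    simp only [hh] at hws
    have hX1 : X ≤ (W * D ^ (1 / s)) * (∫⁻ x, ℱ x ^ r ∂μ) ^ (1 / r) * X ^ (1 / s) := by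
      calc X ≤ ∫⁻ x, 𝒢 x * w x ∂μ := by
            refine lintegral_mono fun x => ?_
            calc u n x ^ r = u n x * u n x ^ (r - 1) := by
                  nth_rewrite 2 [← ENNReal.rpow_one (u n x)]
                  rw [← ENNReal.rpow_add_of_nonneg _ _ zero_le_one (by linarith)]
                  congr 1; ring
              _ ≤ 𝒢 x * w x := mul_le_mul' (hu𝒢 n x) (hFw x)
        _ ≤ W * ∫⁻ x, ℱ x * w x ∂μ :=
            tsum_weighted hw.meas (fun f hf => hw.weighted hμ hA hq hf) hg
        _ ≤ W * ((∫⁻ x, ℱ x ^ r ∂μ) ^ (1 / r) * (∫⁻ x, w x ^ s ∂μ) ^ (1 / s)) := by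
            gcongr W * ?_
            exact ENNReal.lintegral_mul_le_Lp_mul_Lq μ hconj hℱm.aemeasurable hw.meas.aemeasurable
        _ ≤ W * ((∫⁻ x, ℱ x ^ r ∂μ) ^ (1 / r) * (D * X) ^ (1 / s)) := by gcongr
        _ = _ := by
            rw [ENNReal.mul_rpow_of_nonneg _ _ (by positivity)]
            ring
    have hsplit : X = X ^ (1 / r) * X ^ (1 / s) := by
      have h1 : 1 / r + 1 / s = 1 := by simpa using hconj.inv_add_inv_eq_one
      rw [← ENNReal.rpow_add _ _ h0 (hfin n), h1, ENNReal.rpow_one]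
    have hXs0 : X ^ (1 / s) ≠ 0 := by simp [ENNReal.rpow_eq_zero_iff, h0, hs0.le]
    have hXst : X ^ (1 / s) ≠ ∞ := ENNReal.rpow_ne_top_of_nonneg (by positivity) (hfin n)
    nth_rewrite 1 [hsplit] at hX1
    have hX2 := (ENNReal.mul_le_mul_iff_left hXs0 hXst).1 hX1
    have hcancel : ∀ Y : ℝ≥0∞, (Y ^ (1 / r)) ^ r = Y := by
      intro Y
      rw [← ENNReal.rpow_mul, one_div_mul_cancel hr0.ne', ENNReal.rpow_one]
    calc X = (X ^ (1 / r)) ^ r := (hcancel X).symm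
      _ ≤ (W * D ^ (1 / s) * (∫⁻ x, ℱ x ^ r ∂μ) ^ (1 / r)) ^ r := by gcongr
      _ = _ := by rw [ENNReal.mul_rpow_of_nonneg _ _ hr0.le, hcancel]
  calc ∫⁻ x, 𝒢 x ^ r ∂μ = ∫⁻ x, ⨆ n, u n x ^ r ∂μ := by simp only [hsup]
    _ = ⨆ n, ∫⁻ x, u n x ^ r ∂μ := lintegral_iSup (fun n => (hum n).pow_const r) hmono
    _ ≤ _ := iSup_le hbound

theorem vector_valued (hμ : Doubling μ K) (hK : K ≠ ∞) {p q : ℝ} (hp : 1 < p) (hq : 1 < q) :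
    ∃ C : ℝ≥0∞, C ≠ ∞ ∧ ∀ g : ℕ → M → ℝ≥0∞, (∀ j, Measurable (g j)) →
      ∫⁻ x, (∑' j, maxFn μ (g j) x ^ q) ^ (p / q) ∂μ ≤
        C * ∫⁻ x, (∑' j, g j x ^ q) ^ (p / q) ∂μ := by
  rcases lt_trichotomy p q with h | rfl | h
  · exact vector_lt hμ hK hp h
  · refine ⟨strongConst p K, strongConst_ne_top p hK, fun g hg => ?_⟩
    simpa [div_self (by linarith : p ≠ 0)] using vector_eq hμ hq hg
  · exact vector_gt hμ hK hq h

end vector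

end FeffermanStein

/-- Fefferman–Stein vector-valued maximal inequality on a doubling metric
measure space. For `1 < p < ∞` and `1 < q ≤ ∞` there is `C > 0` such that for every sequence
`{f_j}` of measurable functions, `‖(Σ_j (𝓜 f_j)^q)^{1/q}‖_{L^p} ≤ C ‖(Σ_j |f_j|^q)^{1/q}‖_{L^p}`. -/
theorem fefferman_stein
    {M : Type*} [MetricSpace M] [MeasurableSpace M] [BorelSpace M] (μ : Measure M)
    (c₀ : ℝ) (hc₀ : 1 < c₀)
    (hdoubling : ∀ (x : M) (r : ℝ), 0 < r →
      0 < μ (ball x (2 * r)) ∧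
      μ (ball x (2 * r)) ≤ ENNReal.ofReal c₀ * μ (ball x r) ∧
      μ (ball x (2 * r)) < ⊤)
    (p q : ℝ≥0∞) (hp1 : 1 < p) (hp2 : p ≠ ∞) (hq : 1 < q) :
    ∃ C : ℝ≥0∞, 0 < C ∧ C ≠ ∞ ∧
      ∀ f : ℕ → M → ℝ, (∀ j, Measurable (f j)) →
        pNorm μ p (fun x => qSum q (fun j => HLmaximal μ (f j) x)) ≤
          C * pNorm μ p (fun x => qSum q (fun j => ENNReal.ofReal |f j x|)) := by
  have hμ : FeffermanStein.Doubling μ (ENNReal.ofReal c₀) := by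
    refine ⟨fun x r hr => ?_, fun x r => ?_, fun x r hr => (hdoubling x r hr).2.1⟩
    · have := (hdoubling x (r / 2) (by positivity)).1.ne'
      rwa [mul_div_cancel₀ r two_ne_zero] at this
    · rcases le_or_gt r 0 with hr | hr
      · simp [ball_eq_empty.2 hr]
      have := (hdoubling x (r / 2) (by positivity)).2.2.ne
      rwa [mul_div_cancel₀ r two_ne_zero] at this
  have hp : 1 < p.toReal := by
    rwa [← ENNReal.toReal_one, ENNReal.toReal_lt_toReal ENNReal.one_ne_top hp2]
  have hp0 : 0 < p.toReal := by linarith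
  have hHL : ∀ (f : M → ℝ) (x : M),
      HLmaximal μ f x = FeffermanStein.maxFn μ (fun y => ENNReal.ofReal |f y|) x :=
    fun _ _ => rfl
  have hfm : ∀ f : ℕ → M → ℝ, (∀ j, Measurable (f j)) →
      ∀ j, Measurable fun x => ENNReal.ofReal |f j x| := fun f hf j =>
    ENNReal.measurable_ofReal.comp (hf j).abs
  suffices h : ∃ C : ℝ≥0∞, C ≠ ∞ ∧ ∀ f : ℕ → M → ℝ, (∀ j, Measurable (f j)) →
      ∫⁻ x, qSum q (fun j => HLmaximal μ (f j) x) ^ p.toReal ∂μ ≤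
        C * ∫⁻ x, qSum q (fun j => ENNReal.ofReal |f j x|) ^ p.toReal ∂μ by
    obtain ⟨C, hC, H⟩ := h
    refine ⟨(C + 1) ^ (1 / p.toReal), ENNReal.rpow_pos (by simp) (by simp [hC]),
      ENNReal.rpow_ne_top_of_nonneg (by positivity) (by simp [hC]), fun f hf => ?_⟩
    simp only [pNorm, if_neg hp2]
    rw [← ENNReal.mul_rpow_of_nonneg _ _ (by positivity)]
    gcongr ?_ ^ (1 / p.toReal)
    exact (H f hf).trans (by gcongr ?_ * _; exact le_self_add)
  by_cases hqt : q = ∞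
  · refine ⟨_, FeffermanStein.strongConst_ne_top p.toReal (K := ENNReal.ofReal c₀) (by simp), fun f hf => ?_⟩
    simp only [qSum, if_pos hqt, hHL]
    refine le_trans (lintegral_mono fun x => ?_)
      (hμ.strong hp (Measurable.iSup (hfm f hf)))
    gcongr
    exact iSup_le fun j => FeffermanStein.maxFn_mono
      (fun y => le_iSup (fun j => ENNReal.ofReal |f j y|) j) x
  · have hq' : 1 < q.toReal := by
      rwa [← ENNReal.toReal_one, ENNReal.toReal_lt_toReal ENNReal.one_ne_top hqt]
    obtain ⟨C, hC, H⟩ := FeffermanStein.vector_valued hμ ENNReal.ofReal_ne_top hp hq'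
    refine ⟨C, hC, fun f hf => ?_⟩
    simp only [qSum, if_neg hqt, hHL, ← ENNReal.rpow_mul, one_div_mul_eq_div]
    exact H _ (hfm f hf)
end

section
/- Let m be a positive integer and define ω₀(λ) := e^{−λ²} and ω(λ) := λ^{2m} e^{−λ²} for λ ∈ ℝ. Then there exist even Schwartz functions ψ₀, ψ on ℝ such that supp ψ₀ ⊂ {λ : |λ| ≤ 2}, supp ψ ⊂ {λ : 1/2 ≤ |λ| ≤ 2}, and ψ₀(λ) ω₀(λ) + Σ_{j=1}^∞ ψ(2^{−j}λ) ω(2^{−j}λ) = 1 for all λ ∈ ℝ. -/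
/-!
Let `χ` be a smooth even cutoff, equal to `1` on `|x| ≤ 1` and to `0` on `|x| ≥ 2`. Taking
`ψ₀ ω₀ = χ` and `ψ ω = χ - χ(2 ·)`, the sum over `j ≥ 1` telescopes to `1 - χ(x)`, since
`χ(2^{-j} x) = 1` for all large `j`. The function `χ - χ(2 ·)` vanishes unless `1/2 ≤ |x| ≤ 2`, so
it can be divided smoothly by `ω` although `ω` vanishes at the origin.
-/

/-- A smooth even cutoff, equal to `1` on `|x| ≤ 1` and to `0` on `|x| ≥ 2`. -/
noncomputable def dyadicCutoff (x : ℝ) : ℝ := Real.smoothTransition ((4 - x ^ 2) / 3)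

lemma dyadicCutoff_contDiff : ContDiff ℝ (⊤ : ℕ∞) dyadicCutoff :=
  Real.smoothTransition.contDiff.comp (by fun_prop)

lemma dyadicCutoff_neg (x : ℝ) : dyadicCutoff (-x) = dyadicCutoff x := by
  simp [dyadicCutoff]

lemma dyadicCutoff_eq_one {x : ℝ} (h : |x| ≤ 1) : dyadicCutoff x = 1 := by
  apply Real.smoothTransition.one_of_one_le
  have := (sq_le_one_iff_abs_le_one x).2 h
  linarith

lemma dyadicCutoff_eq_zero {x : ℝ} (h : 2 ≤ |x|) : dyadicCutoff x = 0 := by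
  apply Real.smoothTransition.zero_of_nonpos
  have : 4 ≤ x ^ 2 := by rw [← sq_abs]; nlinarith
  linarith

lemma dyadicCutoff_nonneg (x : ℝ) : 0 ≤ dyadicCutoff x := Real.smoothTransition.nonneg _

/-- The cutoff `χ` divided by `ω₀`. -/
noncomputable def lowPiece (x : ℝ) : ℝ := dyadicCutoff x * Real.exp (x ^ 2)

/-- The difference `χ(x) - χ(2x)` divided by `ω(x)`. The summand `χ(4x)` keeps the denominator
positive at the origin; it vanishes for `|x| ≥ 1/2`, while the numerator vanishes for
`|x| ≤ 1/2`, so it does not affect the quotient elsewhere. -/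
noncomputable def highPiece (m : ℕ) (x : ℝ) : ℝ :=
  (dyadicCutoff x - dyadicCutoff (2 * x)) * Real.exp (x ^ 2) /
    (x ^ (2 * m) + dyadicCutoff (4 * x))

lemma denom_pos (m : ℕ) (x : ℝ) : 0 < x ^ (2 * m) + dyadicCutoff (4 * x) := by
  rcases eq_or_ne x 0 with rfl | hx
  · have h1 : dyadicCutoff (4 * 0) = 1 := dyadicCutoff_eq_one (by simp)
    have h2 : (0 : ℝ) ≤ 0 ^ (2 * m) := by positivity
    linarith
  · have h1 : 0 < x ^ (2 * m) := by
      rw [pow_mul]; positivity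
    linarith [dyadicCutoff_nonneg (4 * x)]

lemma dyadicDiff_eq_zero {x : ℝ} (h : ¬ (1 / 2 ≤ |x| ∧ |x| ≤ 2)) :
    dyadicCutoff x - dyadicCutoff (2 * x) = 0 := by
  have h2 : |2 * x| = 2 * |x| := by rw [abs_mul]; norm_num
  rcases lt_or_ge |x| (1 / 2) with hx | hx
  · rw [dyadicCutoff_eq_one (by linarith), dyadicCutoff_eq_one (by linarith), sub_self]
  · have hx' : 2 < |x| := by
      by_contra hc
      exact h ⟨hx, not_lt.1 hc⟩
    rw [dyadicCutoff_eq_zero hx'.le, dyadicCutoff_eq_zero (by linarith), sub_self]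

lemma tsupport_lowPiece : tsupport lowPiece ⊆ {x : ℝ | |x| ≤ 2} := by
  apply closure_minimal _ (isClosed_le continuous_abs continuous_const)
  intro x hx
  by_contra hc
  rw [Set.mem_setOf_eq, not_le] at hc
  exact hx (by simp [lowPiece, dyadicCutoff_eq_zero hc.le])

lemma tsupport_highPiece (m : ℕ) :
    tsupport (highPiece m) ⊆ {x : ℝ | 1 / 2 ≤ |x| ∧ |x| ≤ 2} := by
  apply closure_minimal _ ((isClosed_le continuous_const continuous_abs).inter
    (isClosed_le continuous_abs continuous_const))
  intro x hx
  by_contra hc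
  exact hx (by simp [highPiece, dyadicDiff_eq_zero hc])

lemma hasCompactSupport_of_tsupport_abs_le {f : ℝ → ℝ} (h : tsupport f ⊆ {x : ℝ | |x| ≤ 2}) :
    HasCompactSupport f :=
  (isCompact_Icc (a := (-2 : ℝ)) (b := 2)).of_isClosed_subset (isClosed_tsupport f)
    fun _ hx => abs_le.1 (h hx)

lemma lowPiece_contDiff : ContDiff ℝ (⊤ : ℕ∞) lowPiece :=
  dyadicCutoff_contDiff.mul (by fun_prop)

lemma highPiece_contDiff (m : ℕ) : ContDiff ℝ (⊤ : ℕ∞) (highPiece m) := by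
  have h (c : ℝ) : ContDiff ℝ (⊤ : ℕ∞) fun x => dyadicCutoff (c * x) :=
    dyadicCutoff_contDiff.comp (by fun_prop)
  exact ((dyadicCutoff_contDiff.sub (h 2)).mul (by fun_prop)).div
    (ContDiff.add (by fun_prop) (h 4)) fun x => (denom_pos m x).ne'

lemma highPiece_mul (m : ℕ) (x : ℝ) :
    highPiece m x * (x ^ (2 * m) * Real.exp (-x ^ 2)) =
      dyadicCutoff x - dyadicCutoff (2 * x) := by
  by_cases h : 1 / 2 ≤ |x| ∧ |x| ≤ 2
  · have h4 : dyadicCutoff (4 * x) = 0 := by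
      apply dyadicCutoff_eq_zero
      rw [abs_mul, abs_of_pos (by norm_num : (0 : ℝ) < 4)]
      linarith [h.1]
    have hp := denom_pos m x
    rw [h4, add_zero] at hp
    rw [highPiece, h4, add_zero, Real.exp_neg]
    have := Real.exp_ne_zero (x ^ 2)
    field_simp
  · simp [highPiece, dyadicDiff_eq_zero h]

/-- For a positive integer `m`, with `ω₀(λ) = e^{-λ²}` and
`ω(λ) = λ^{2m} e^{-λ²}`, there exist even Schwartz functions `ψ₀, ψ` on `ℝ` with
`supp ψ₀ ⊆ {|λ| ≤ 2}`, `supp ψ ⊆ {1/2 ≤ |λ| ≤ 2}`, and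
`ψ₀(λ) ω₀(λ) + Σ_{j=1}^∞ ψ(2^{-j}λ) ω(2^{-j}λ) = 1` for all `λ ∈ ℝ`. -/
theorem exists_schwartz_partition (m : ℕ) (hm : 0 < m) :
    ∃ ψ₀ ψ : SchwartzMap ℝ ℝ,
      (∀ x : ℝ, ψ₀ (-x) = ψ₀ x) ∧ (∀ x : ℝ, ψ (-x) = ψ x) ∧
      tsupport (⇑ψ₀) ⊆ {x : ℝ | |x| ≤ 2} ∧
      tsupport (⇑ψ) ⊆ {x : ℝ | 1 / 2 ≤ |x| ∧ |x| ≤ 2} ∧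
      ∀ x : ℝ,
        ψ₀ x * Real.exp (-x ^ 2) +
          ∑' j : ℕ, ψ ((2 : ℝ) ^ (-((j : ℝ) + 1)) * x) *
            (((2 : ℝ) ^ (-((j : ℝ) + 1)) * x) ^ (2 * m) *
              Real.exp (-((2 : ℝ) ^ (-((j : ℝ) + 1)) * x) ^ 2)) = 1 := by
  have hlow := hasCompactSupport_of_tsupport_abs_le tsupport_lowPiece
  have hhigh := hasCompactSupport_of_tsupport_abs_le
    ((tsupport_highPiece m).trans fun _ hx => hx.2)
  refine ⟨hlow.toSchwartzMap lowPiece_contDiff, hhigh.toSchwartzMap (highPiece_contDiff m),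
    fun x => ?_, fun x => ?_, tsupport_lowPiece, tsupport_highPiece m, fun x => ?_⟩
  · change lowPiece (-x) = lowPiece x
    simp [lowPiece, dyadicCutoff_neg]
  · change highPiece m (-x) = highPiece m x
    simp [highPiece, dyadicCutoff_neg, pow_mul]
  · change lowPiece x * _ + ∑' j : ℕ, highPiece m _ * _ = 1
    simp_rw [highPiece_mul]
    have hlow_mul : lowPiece x * Real.exp (-x ^ 2) = dyadicCutoff x := by
      rw [lowPiece, mul_assoc, ← Real.exp_add]
      simp
    rw [hlow_mul]
    let f : ℕ → ℝ := fun j => dyadicCutoff (((2 : ℝ) ^ j)⁻¹ * x)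
    have hterm (j : ℕ) : dyadicCutoff ((2 : ℝ) ^ (-((j : ℝ) + 1)) * x) -
        dyadicCutoff (2 * ((2 : ℝ) ^ (-((j : ℝ) + 1)) * x)) = f (j + 1) - f j := by
      have h1 : (2 : ℝ) ^ (-((j : ℝ) + 1)) = ((2 : ℝ) ^ (j + 1))⁻¹ := by
        rw [Real.rpow_neg (by norm_num), ← Real.rpow_natCast]
        push_cast
        rfl
      have h2 : 2 * (((2 : ℝ) ^ (j + 1))⁻¹ * x) = ((2 : ℝ) ^ j)⁻¹ * x := by
        rw [pow_succ]
        field_simp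
      rw [h1, h2]
    simp_rw [hterm]
    obtain ⟨N, hN⟩ := pow_unbounded_of_one_lt |x| (by norm_num : (1 : ℝ) < 2)
    have hone (j : ℕ) (hj : N ≤ j) : f j = 1 := by
      apply dyadicCutoff_eq_one
      have hle : (2 : ℝ) ^ N ≤ 2 ^ j := pow_le_pow_right₀ (by norm_num) hj
      have hpos : (0 : ℝ) < 2 ^ j := by positivity
      rw [abs_mul, abs_of_pos (inv_pos.2 hpos), inv_mul_le_iff₀ hpos]
      linarith
    rw [tsum_eq_sum (s := Finset.range N), Finset.sum_range_sub, hone N le_rfl]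
    · simp [f]
    · intro j hj
      have hj' : N ≤ j := by simpa using hj
      rw [hone j hj', hone (j + 1) (by omega), sub_self]
end
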